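/- arXiv:1902.00427 — 4 statements merged into one kernel-verified Lean document; each statement's English description precedes it below -/
import Mathlib

section
/- Let (X,μ) be a measure space, S a linear subspace of L¹(X,μ), and Ω ⊆ X a measurable set such that every nonzero s ∈ S satisfies ∫_Ω |s| dμ < (1/2) ∫_X |s| dμ. Let f ∈ S and let N ∈ L¹(X,μ) vanish a.e. outside Ω (the noise is supported in Ω). Then f is the unique minimizer over S of s ↦ ‖(f+N) − s‖_{L¹(X,μ)}: for every s ∈ S one has ‖N‖₁ = ‖(f+N) − f‖₁ ≤ ‖(f+N) − s‖₁, with strict inequality whenever s ≠ f in L¹(X,μ). -/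
open MeasureTheory

/-!
Put `h = f - s ∈ S`, so that `f + N - s = h + N`. Off the support of `N` the error `h + N` is `h`
itself, while on it `‖h + N‖ ≥ ‖N‖ - ‖h‖`. As this support lies in `Ω` up to a null set,
integrating gives `‖h + N‖₁ ≥ ‖N‖₁ + ‖h‖₁ - 2 ∫_Ω ‖h‖`, and `h` has less than half of its `L¹` mass
on `Ω` unless it vanishes a.e.
-/

section NormedGroup

open Function

variable {X E : Type*}

lemma norm_add_norm_le_norm_add_add_indicator_support [SeminormedAddGroup E]
    (h N : X → E) (x : X) :
    ‖h x‖ + ‖N x‖ ≤ ‖h x + N x‖ + 2 * (support N).indicator (‖h ·‖) x := by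
  by_cases hx : x ∈ support N
  · rw [Set.indicator_of_mem hx]
    linarith [norm_le_add_norm_add' (h x) (N x)]
  · simp [notMem_support.mp hx]

variable [NormedAddCommGroup E] [MeasurableSpace X] {μ : Measure X} {h N : X → E} {Ω : Set X}

lemma integral_norm_add_integral_norm_le_add_setIntegral_support
    (hh : Integrable h μ) (hN : Integrable N μ) :
    (∫ x, ‖h x‖ ∂μ) + ∫ x, ‖N x‖ ∂μ
      ≤ (∫ x, ‖h x + N x‖ ∂μ) + 2 * ∫ x in support N, ‖h x‖ ∂μ := by
  have hsupp := hN.aestronglyMeasurable.nullMeasurableSet_support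
  have hind : Integrable ((support N).indicator (‖h ·‖)) μ := hh.norm.indicator₀ hsupp
  have hsum : Integrable (fun x ↦ ‖h x + N x‖) μ := (hh.add hN).norm
  rw [← integral_add hh.norm hN.norm, ← integral_indicator₀ hsupp, ← integral_const_mul,
    ← integral_add hsum (hind.const_mul 2)]
  exact integral_mono (hh.norm.add hN.norm) (hsum.add (hind.const_mul 2))
    (norm_add_norm_le_norm_add_add_indicator_support h N)

lemma integral_norm_lt_integral_norm_add_of_setIntegral_lt
    (hh : Integrable h μ) (hN : Integrable N μ) (hNsupp : ∀ᵐ x ∂μ, x ∉ Ω → N x = 0)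
    (hconc : (∫ x in Ω, ‖h x‖ ∂μ) < (1 / 2) * ∫ x, ‖h x‖ ∂μ) :
    (∫ x, ‖N x‖ ∂μ) < ∫ x, ‖h x + N x‖ ∂μ := by
  have hsub : support N ≤ᵐ[μ] Ω := hNsupp.mono fun x hx hxN ↦ not_imp_comm.mp hx hxN
  have hmono : (∫ x in support N, ‖h x‖ ∂μ) ≤ ∫ x in Ω, ‖h x‖ ∂μ :=
    setIntegral_mono_set hh.norm.integrableOn (.of_forall fun x ↦ norm_nonneg (h x)) hsub
  linarith [integral_norm_add_integral_norm_le_add_setIntegral_support hh hN]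

theorem logan_l1_minimization_general (S : AddSubgroup (X → E)) (hSint : ∀ s ∈ S, Integrable s μ)
    (hconc : ∀ s ∈ S, ¬ s =ᵐ[μ] 0 → (∫ x in Ω, ‖s x‖ ∂μ) < (1 / 2) * ∫ x, ‖s x‖ ∂μ)
    {f : X → E} (hf : f ∈ S) (hNint : Integrable N μ) (hNsupp : ∀ᵐ x ∂μ, x ∉ Ω → N x = 0)
    {s : X → E} (hs : s ∈ S) :
    (∫ x, ‖N x‖ ∂μ) ≤ (∫ x, ‖(f x + N x) - s x‖ ∂μ) ∧
      (¬ s =ᵐ[μ] f → (∫ x, ‖N x‖ ∂μ) < ∫ x, ‖(f x + N x) - s x‖ ∂μ) := by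
  have hmem : f - s ∈ S := S.sub_mem hf hs
  have heq (x : X) : (f x + N x) - s x = (f - s) x + N x := add_sub_right_comm ..
  simp only [heq]
  by_cases hsf : s =ᵐ[μ] f
  · have hzero : ∀ᵐ x ∂μ, ‖N x‖ = ‖(f - s) x + N x‖ := hsf.mono fun x hx ↦ by simp [hx]
    exact ⟨(integral_congr_ae hzero).le, fun hne ↦ absurd hsf hne⟩
  · have hne : ¬ f - s =ᵐ[μ] 0 := fun h0 ↦ hsf ((sub_ae_eq_zero f s).mp h0).symm
    have hlt := integral_norm_lt_integral_norm_add_of_setIntegral_lt (hSint _ hmem) hNint hNsupp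
      (hconc _ hmem hne)
    exact ⟨hlt.le, fun _ ↦ hlt⟩

end NormedGroup

/-- **Logan's phenomenon.** Let `(X, μ)` be a measure space, `S` a linear
subspace of `L¹(X, μ)` and `Ω ⊆ X` measurable, such that every nonzero `s ∈ S` satisfies
`∫_Ω |s| dμ < (1/2) ∫_X |s| dμ`.  If `f ∈ S` and the noise `N ∈ L¹(X, μ)` vanishes a.e.
outside `Ω`, then `f` is the unique minimizer over `S` of `s ↦ ‖(f + N) - s‖₁`:
for every `s ∈ S`, `‖N‖₁ = ‖(f+N) - f‖₁ ≤ ‖(f+N) - s‖₁`, with strict inequality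
whenever `s ≠ f` in `L¹(X, μ)`. -/
theorem logan_l1_minimization
    {X : Type*} [MeasurableSpace X] (μ : Measure X)
    (S : Submodule ℂ (X → ℂ)) (hSint : ∀ s ∈ S, Integrable s μ)
    (Ω : Set X) (hΩ : MeasurableSet Ω)
    (hconc : ∀ s ∈ S, ¬ (s =ᵐ[μ] (0 : X → ℂ)) →
      (∫ x in Ω, ‖s x‖ ∂μ) < (1 / 2) * ∫ x, ‖s x‖ ∂μ)
    (f : X → ℂ) (hf : f ∈ S)
    (N : X → ℂ) (hNint : Integrable N μ)
    (hNsupp : ∀ᵐ x ∂μ, x ∉ Ω → N x = 0) :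
    ∀ s ∈ S,
      (∫ x, ‖N x‖ ∂μ) ≤ (∫ x, ‖(f x + N x) - s x‖ ∂μ) ∧
      (¬ (s =ᵐ[μ] f) → (∫ x, ‖N x‖ ∂μ) < ∫ x, ‖(f x + N x) - s x‖ ∂μ) :=
  fun _ ↦ logan_l1_minimization_general S.toAddSubgroup hSint hconc hf hNint hNsupp
end

section
/- Let (X,μ) be a measure space, S a linear subspace of L¹(X,μ), and Ω ⊆ X a measurable set such that every nonzero s ∈ S satisfies ∫_Ω |s| dμ < (1/2) ∫_X |s| dμ. Let f ∈ S. Then any s ∈ S that agrees with f μ-a.e. on the complement Ω^c equals f in L¹(X,μ); in particular, f is the unique solution of the minimization problem min{‖s‖₁ : s ∈ S, s = f a.e. on Ω^c}, so f can be perfectly reconstructed from its restriction to Ω^c. -/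
open MeasureTheory

section Reconstruction

variable {X E : Type*} [MeasurableSpace X] [NormedAddGroup E] {μ : Measure X} {Ω : Set X}
  {f s : X → E}

lemma setIntegral_norm_sub_eq_integral_of_ae_eq_compl (hsf : ∀ᵐ x ∂μ, x ∈ Ωᶜ → s x = f x) :
    ∫ x in Ω, ‖(s - f) x‖ ∂μ = ∫ x, ‖(s - f) x‖ ∂μ :=
  setIntegral_eq_integral_of_ae_compl_eq_zero <| by
    filter_upwards [hsf] with x hx hxΩ
    rw [Pi.sub_apply, hx hxΩ, sub_self, norm_zero]

/-- For nonzero `d ∈ S`, the strict inequality rules out the junk value `∫ ‖d‖ = 0` of a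
non-integrable norm. -/
theorem donoho_stark_l1_reconstruction_general (S : AddSubgroup (X → E))
    (hconc : ∀ d ∈ S, ¬ d =ᵐ[μ] 0 → ∫ x in Ω, ‖d x‖ ∂μ < ∫ x, ‖d x‖ ∂μ)
    (hf : f ∈ S) (hs : s ∈ S) (hsf : ∀ᵐ x ∂μ, x ∈ Ωᶜ → s x = f x) :
    s =ᵐ[μ] f := by
  by_contra hne
  have hsub_ne : ¬ s - f =ᵐ[μ] 0 := mt Filter.eventuallyEq_iff_sub.mpr hne
  exact (hconc (s - f) (S.sub_mem hs hf) hsub_ne).ne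
    (setIntegral_norm_sub_eq_integral_of_ae_eq_compl hsf)

end Reconstruction

/-- **Donoho–Stark type reconstruction.** Let `(X, μ)` be a measure space,
`S` a linear subspace of `L¹(X, μ)` and `Ω ⊆ X` measurable, such that every nonzero
`s ∈ S` satisfies `∫_Ω |s| dμ < (1/2) ∫_X |s| dμ`.  Then for `f ∈ S`, any `s ∈ S`
agreeing with `f` μ-a.e. on `Ωᶜ` equals `f` in `L¹(X, μ)`; in particular `f` is the
unique solution of `min {‖s‖₁ : s ∈ S, s = f a.e. on Ωᶜ}`, i.e. `f` is perfectly
reconstructed from its restriction to `Ωᶜ`. -/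
theorem donoho_stark_l1_reconstruction
    {X : Type*} [MeasurableSpace X] (μ : Measure X)
    (S : Submodule ℂ (X → ℂ)) (hSint : ∀ s ∈ S, Integrable s μ)
    (Ω : Set X) (hΩ : MeasurableSet Ω)
    (hconc : ∀ s ∈ S, ¬ (s =ᵐ[μ] (0 : X → ℂ)) →
      (∫ x in Ω, ‖s x‖ ∂μ) < (1 / 2) * ∫ x, ‖s x‖ ∂μ)
    (f : X → ℂ) (hf : f ∈ S) :
    ∀ s ∈ S, (∀ᵐ x ∂μ, x ∈ Ωᶜ → s x = f x) → s =ᵐ[μ] f := by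
  refine fun s hs hsf ↦ donoho_stark_l1_reconstruction_general S.toAddSubgroup
    (fun d hd hne ↦ (hconc d hd hne).trans_le ?_) hf hs hsf
  exact mul_le_of_le_one_left (integral_nonneg fun x ↦ norm_nonneg (d x)) one_half_lt_one.le
end

section
/- (Bombieri's large sieve inequality) Let μ be a nonnegative 1-periodic Borel measure on ℝ, let 0 < δ ≤ 1, and let f(α) = Σ_{k=m+1}^{m+n} a_k e^{2πikα} be a trigonometric polynomial with complex coefficients a_k. Then ∫_{[0,1)} |f(α)|² dμ(α) ≤ (n + 2/δ) · (sup_{α∈ℝ} μ([α, α+δ])) · ∫_0^1 |f(α)|² dα. -/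
open MeasureTheory

/-!
By duality it suffices to bound `∑ₖ |∫ g(x) e(-kx) dν|²` by `(n + 2/δ) M ∫ |g|² dν`, where `ν` is
the measure induced on the circle and `M` bounds the mass of every arc of length `δ`. Choose `J`
with `J < 1/δ ≤ J + 1`. Each of the `n` frequencies `k` is hit `J + 1` times by `q - p`, where
`0 ≤ p ≤ J` and `q` runs over an interval of length `n + J`. Expanding the square of the sum over
all pairs `(p, q)` therefore produces a kernel of modulus `|D_{J+1} D_{n+J}|`, `D_N` being the
Dirichlet sum of length `N`, instead of the slowly decaying `D_n`. By Schur's test the dual sum is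
at most `sup_x ∫ |D_{J+1} D_{n+J}|(y - x) dν(y) / (J + 1)`. On the annuli `jδ/2 ≤ ‖y - x‖ ≤
(j + 1)δ/2` the kernel is at most `(J + 1)(n + J)` for `j = 0` and at most `1 / sin²(πjδ/2)` for
`1 ≤ j ≤ J`; these bounds decrease, so summation by parts reduces to the mass bound on balls, and
since `∑ⱼ 1 / sin²(πjδ/2) ≤ 1/δ²` the constant is `n + J + 1/(δ²(J + 1)) ≤ n + 2/δ`.
-/

open scoped ENNReal Real ComplexConjugate InnerProductSpace

lemma inv_sin_sq_le_cot_sub_cot_div_sin {x y : ℝ} (hy : 0 < y) (hyx : y < x) (hxy : x + y < π) :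
    (Real.sin x ^ 2)⁻¹ ≤ (Real.cot (x - y) - Real.cot (x + y)) / Real.sin (2 * y) := by
  have hsub : 0 < Real.sin (x - y) := Real.sin_pos_of_pos_of_lt_pi (by linarith) (by linarith)
  have hadd : 0 < Real.sin (x + y) := Real.sin_pos_of_pos_of_lt_pi (by linarith) hxy
  have hdouble : 0 < Real.sin (2 * y) := Real.sin_pos_of_pos_of_lt_pi (by linarith) (by linarith)
  have hprod : Real.sin (x - y) * Real.sin (x + y) = Real.sin x ^ 2 - Real.sin y ^ 2 := by
    rw [Real.sin_sub, Real.sin_add]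
    linear_combination Real.sin x ^ 2 * Real.cos_sq' y - Real.sin y ^ 2 * Real.cos_sq' x
  have hcot : Real.cot (x - y) - Real.cot (x + y) =
      Real.sin (2 * y) / (Real.sin (x - y) * Real.sin (x + y)) := by
    have h : Real.sin (2 * y) =
        Real.sin (x + y) * Real.cos (x - y) - Real.cos (x + y) * Real.sin (x - y) := by
      rw [← Real.sin_sub]; ring_nf
    rw [Real.cot_eq_cos_div_sin, Real.cot_eq_cos_div_sin, div_sub_div _ _ hsub.ne' hadd.ne', h]
    ring
  rw [hcot, div_right_comm, div_self hdouble.ne', one_div]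
  gcongr
  linarith [sq_nonneg (Real.sin y)]

lemma cot_half_sub_cot_le {x y : ℝ} (hx : 0 < x) (hxy : x ≤ y) (hy : y ≤ π / 2) :
    Real.cot (x / 2) - Real.cot (y + x / 2) ≤ 2 / Real.sin x := by
  have hhalf : 0 < Real.sin (x / 2) := Real.sin_pos_of_pos_of_lt_pi (by linarith) (by linarith)
  have hcosHalf : 0 < Real.cos (x / 2) := Real.cos_pos_of_mem_Ioo ⟨by linarith, by linarith⟩
  have hend : 0 < Real.sin (y + x / 2) := Real.sin_pos_of_pos_of_lt_pi (by linarith) (by linarith)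
  have hcos : 0 ≤ Real.cos y := Real.cos_nonneg_of_neg_pi_div_two_le_of_le (by linarith) hy
  calc Real.cot (x / 2) - Real.cot (y + x / 2)
      = Real.sin y / (Real.sin (x / 2) * Real.sin (y + x / 2)) := by
        have h : Real.sin y = Real.sin (y + x / 2) * Real.cos (x / 2) -
            Real.cos (y + x / 2) * Real.sin (x / 2) := by
          rw [← Real.sin_sub]; ring_nf
        rw [Real.cot_eq_cos_div_sin, Real.cot_eq_cos_div_sin,
          div_sub_div _ _ hhalf.ne' hend.ne', h]
        ring
    _ ≤ 1 / (Real.sin (x / 2) * Real.cos (x / 2)) := by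
        rw [div_le_div_iff₀ (by positivity) (by positivity), Real.sin_add]
        nlinarith [mul_nonneg hcos (sq_nonneg (Real.sin (x / 2)))]
    _ = 2 / Real.sin x := by
        rw [show Real.sin x = 2 * (Real.sin (x / 2) * Real.cos (x / 2)) by
          rw [← mul_assoc, ← Real.sin_two_mul]; ring_nf]
        field_simp

lemma sum_inv_sin_sq_le_two_div_sin_sq {x : ℝ} (hx : 0 < x) (J : ℕ) (hJ : J * x ≤ π / 2) :
    ∑ j ∈ Finset.range J, (Real.sin ((j + 1) * x) ^ 2)⁻¹ ≤ 2 / Real.sin x ^ 2 := by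
  obtain rfl | hJpos := J.eq_zero_or_pos
  · simpa using by positivity
  have hxJ : x ≤ J * x := le_mul_of_one_le_left hx.le (by exact_mod_cast hJpos)
  have hsin : 0 < Real.sin x := Real.sin_pos_of_pos_of_lt_pi hx (by linarith)
  calc ∑ j ∈ Finset.range J, (Real.sin ((j + 1) * x) ^ 2)⁻¹
      ≤ ∑ j ∈ Finset.range J,
          (Real.cot (j * x + x / 2) - Real.cot ((j + 1 : ℕ) * x + x / 2)) / Real.sin x := by
        refine Finset.sum_le_sum fun j hj ↦ ?_
        have hjJ : ((j : ℝ) + 1) * x ≤ J * x := by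
          gcongr; exact_mod_cast Finset.mem_range.1 hj
        have hj0 : 0 ≤ j * x := by positivity
        have h := inv_sin_sq_le_cot_sub_cot_div_sin (x := (j + 1) * x) (half_pos hx)
          (by linarith) (by linarith)
        push_cast
        rwa [show (j + 1) * x - x / 2 = j * x + x / 2 by ring, mul_div_cancel₀ x two_ne_zero]
          at h
    _ = (Real.cot (x / 2) - Real.cot (J * x + x / 2)) / Real.sin x := by
        rw [← Finset.sum_div, Finset.sum_range_sub' fun j : ℕ ↦ Real.cot (j * x + x / 2)]
        simp
    _ ≤ 2 / Real.sin x / Real.sin x := by gcongr; exact cot_half_sub_cot_le hx hxJ hJ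
    _ = 2 / Real.sin x ^ 2 := by rw [div_div, sq]

lemma sqrt_two_div_le_sin {κ : ℝ} (hκ : 2 ≤ κ) : √2 / κ ≤ Real.sin (π / (2 * κ)) := by
  have hκ0 : 0 < κ := by linarith
  have h := strictConcaveOn_sin_Icc.concaveOn.2 ⟨le_rfl, Real.pi_pos.le⟩
    (show π / 4 ∈ Set.Icc 0 π from ⟨by positivity, by linarith [Real.pi_pos]⟩)
    (show 0 ≤ 1 - 2 / κ by rw [sub_nonneg, div_le_one hκ0]; exact hκ)
    (by positivity) (sub_add_cancel 1 (2 / κ))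
  simp only [smul_eq_mul, Real.sin_zero, mul_zero, zero_add, Real.sin_pi_div_four] at h
  calc √2 / κ = 2 / κ * (√2 / 2) := by ring
    _ ≤ Real.sin (2 / κ * (π / 4)) := h
    _ = Real.sin (π / (2 * κ)) := by congr 1; field_simp; norm_num

lemma sum_inv_sin_sq_le_sq {κ : ℝ} (J : ℕ) (hJ : J < κ) :
    ∑ j ∈ Finset.range J, (Real.sin ((j + 1) * (π / (2 * κ))) ^ 2)⁻¹ ≤ κ ^ 2 := by
  have hκ : 0 < κ := J.cast_nonneg.trans_lt hJ
  rcases le_total κ 2 with hκ2 | hκ2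
  · have hJ2 : J < 2 := by exact_mod_cast hJ.trans_le hκ2
    interval_cases J
    · simpa using sq_nonneg κ
    · have hκ1 : 1 < κ := by simpa using hJ
      have hjordan : κ⁻¹ ≤ Real.sin (π / (2 * κ)) := by
        convert Real.mul_le_sin (x := π / (2 * κ)) (by positivity) (by gcongr; linarith) using 1
        field_simp
      simpa using inv_anti₀ (by positivity) (pow_le_pow_left₀ (by positivity) hjordan 2)
  · have hJx : J * (π / (2 * κ)) ≤ π / 2 := by
      rw [mul_div_assoc', div_le_div_iff₀ (by positivity) two_pos]
      nlinarith [Real.pi_pos]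
    calc _ ≤ 2 / Real.sin (π / (2 * κ)) ^ 2 :=
          sum_inv_sin_sq_le_two_div_sin_sq (by positivity) J hJx
      _ ≤ 2 / (√2 / κ) ^ 2 := by gcongr; exact sqrt_two_div_le_sin hκ2
      _ = κ ^ 2 := by rw [div_pow, Real.sq_sqrt two_pos.le]; field_simp

lemma exists_coe_eq_and_abs_eq_norm {p : ℝ} (x : AddCircle p) :
    ∃ t : ℝ, (t : AddCircle p) = x ∧ |t| = ‖x‖ := by
  obtain ⟨t, rfl⟩ := QuotientAddGroup.mk_surjective x
  refine ⟨t - round (p⁻¹ * t) * p, ?_, (AddCircle.norm_eq p).symm⟩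
  rw [AddCircle.coe_sub, (AddCircle.coe_eq_zero_iff p).2 ⟨round (p⁻¹ * t), zsmul_eq_mul _ _⟩]
  exact sub_zero _

lemma norm_unitAddCircle_le_half (x : UnitAddCircle) : ‖x‖ ≤ 1 / 2 := by
  simpa using AddCircle.norm_le_half_period 1 one_ne_zero (x := x)

lemma norm_fourier_one_sub_one (x : UnitAddCircle) :
    ‖fourier 1 x - 1‖ = 2 * Real.sin (π * ‖x‖) := by
  obtain ⟨t, rfl, ht⟩ := exists_coe_eq_and_abs_eq_norm x
  have habs : |π * t| = π * |t| := by rw [abs_mul, abs_of_pos Real.pi_pos]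
  have hle : |π * t| ≤ π := by
    rw [habs, ht]
    exact mul_le_of_le_one_right Real.pi_pos.le ((norm_unitAddCircle_le_half _).trans (by norm_num))
  have hexp : fourier 1 (t : UnitAddCircle) = Complex.exp (Complex.I * (2 * (π * t) : ℝ)) := by
    rw [fourier_coe_apply]
    push_cast
    ring_nf
  rw [hexp, Complex.norm_exp_I_mul_ofReal_sub_one, norm_mul, Real.norm_two,
    mul_div_cancel_left₀ _ two_ne_zero, Real.norm_eq_abs,
    Real.abs_sin_eq_sin_abs_of_abs_le_pi hle, habs, ht]

lemma enorm_fourier_apply (k : ℤ) (x : UnitAddCircle) : ‖fourier k x‖ₑ = 1 := by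
  rw [fourier_apply, ← ofReal_norm, Circle.norm_coe, ENNReal.ofReal_one]

/-- The exponential sum `∑_{0 ≤ j < N} e(jx)`, the one-sided Dirichlet kernel of length `N`. -/
noncomputable def dirichletSum (N : ℕ) (x : UnitAddCircle) : ℂ :=
  ∑ j ∈ Finset.range N, fourier j x

lemma continuous_dirichletSum (N : ℕ) : Continuous (dirichletSum N) := by
  unfold dirichletSum; fun_prop

lemma enorm_dirichletSum_le_natCast (N : ℕ) (x : UnitAddCircle) : ‖dirichletSum N x‖ₑ ≤ N :=
  calc ‖dirichletSum N x‖ₑ ≤ ∑ j ∈ Finset.range N, ‖fourier j x‖ₑ := enorm_sum_le _ _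
    _ = N := by simp [enorm_fourier_apply, -fourier_apply]

lemma enorm_dirichletSum_le_inv_sin (N : ℕ) (x : UnitAddCircle) :
    ‖dirichletSum N x‖ₑ ≤ (ENNReal.ofReal (Real.sin (π * ‖x‖)))⁻¹ := by
  have hgeom : dirichletSum N x * (fourier 1 x - 1) = fourier N x - 1 := by
    simpa [dirichletSum, fourier_apply, AddCircle.toCircle_nsmul] using
      geom_sum_mul (fourier 1 x) N
  have hnorm : ‖dirichletSum N x‖ * Real.sin (π * ‖x‖) ≤ 1 := by
    have h : ‖dirichletSum N x * (fourier 1 x - 1)‖ ≤ 1 + 1 := by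
      rw [hgeom]
      exact (norm_sub_le _ _).trans (by rw [fourier_apply, Circle.norm_coe, norm_one])
    rw [norm_mul, norm_fourier_one_sub_one] at h
    linarith
  rw [ENNReal.le_inv_iff_mul_le, ← ofReal_norm, ← ENNReal.ofReal_mul (norm_nonneg _)]
  exact ENNReal.ofReal_le_one.2 hnorm

lemma closedBall_add_subset_union {p : ℝ} (a b : ℝ) (x : AddCircle p) :
    Metric.closedBall x (a + b) ⊆ Metric.closedBall (x - b) a ∪ Metric.closedBall (x + a) b := by
  intro y hy
  obtain ⟨t, hty, ht⟩ := exists_coe_eq_and_abs_eq_norm (y - x)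
  have htab : |t| ≤ a + b := by rwa [ht, ← dist_eq_norm]
  obtain ⟨hlower, hupper⟩ := abs_le.1 htab
  have hnorm_le (s : ℝ) : ‖(s : AddCircle p)‖ ≤ |s| := QuotientAddGroup.norm_mk_le_norm
  rcases le_total t (a - b) with h | h
  · left
    have hdiff : y - (x - b) = ((t + b : ℝ) : AddCircle p) := by
      rw [AddCircle.coe_add, hty]; abel
    rw [Metric.mem_closedBall, dist_eq_norm, hdiff]
    exact (hnorm_le _).trans (abs_le.2 ⟨by linarith, by linarith⟩)
  · right
    have hdiff : y - (x + a) = ((t - a : ℝ) : AddCircle p) := by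
      rw [AddCircle.coe_sub, hty]; abel
    rw [Metric.mem_closedBall, dist_eq_norm, hdiff]
    exact (hnorm_le _).trans (abs_le.2 ⟨by linarith, by linarith⟩)

lemma measure_closedBall_add_one_mul_le {p : ℝ} {ν : Measure (AddCircle p)} {r : ℝ} {M : ℝ≥0∞}
    (hM : ∀ x, ν (Metric.closedBall x r) ≤ M) (j : ℕ) (x : AddCircle p) :
    ν (Metric.closedBall x ((j + 1) * r)) ≤ (j + 1) * M := by
  induction j generalizing x with
  | zero => simpa using hM x
  | succ j ih =>
    push_cast
    rw [add_one_mul _ r, add_one_mul _ M]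
    calc _ ≤ ν (Metric.closedBall (x - r) ((j + 1) * r) ∪
          Metric.closedBall (x + ((j + 1) * r : ℝ)) r) :=
          measure_mono (closedBall_add_subset_union _ _ x)
      _ ≤ (j + 1) * M + M := (measure_union_le _ _).trans (add_le_add (ih _) (hM _))

lemma sum_mul_le_sum_mul_of_antitoneOn {F a b : ℕ → ℝ≥0∞} {n : ℕ} (hF : AntitoneOn F (Set.Iio n))
    (hab : ∀ j < n, ∑ i ∈ Finset.range (j + 1), a i ≤ ∑ i ∈ Finset.range (j + 1), b i) :
    ∑ i ∈ Finset.range n, F i * a i ≤ ∑ i ∈ Finset.range n, F i * b i := by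
  induction n generalizing F with
  | zero => simp
  | succ n ih =>
    have hsplit (c : ℕ → ℝ≥0∞) : ∑ i ∈ Finset.range (n + 1), F i * c i =
        ∑ i ∈ Finset.range n, (F i - F n) * c i + F n * ∑ i ∈ Finset.range (n + 1), c i := by
      rw [Finset.sum_range_succ, Finset.sum_range_succ, mul_add, ← add_assoc, Finset.mul_sum,
        ← Finset.sum_add_distrib]
      congr 1
      refine Finset.sum_congr rfl fun i hi ↦ ?_
      rw [← add_mul, tsub_add_cancel_of_le]
      have hin : i < n := Finset.mem_range.1 hi
      exact hF (hin.trans n.lt_succ_self) n.lt_succ_self hin.le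
    rw [hsplit, hsplit]
    gcongr ?_ + F n * ?_
    · exact ih (fun i hi j hj hij ↦ tsub_le_tsub_right
        (hF (Nat.lt_succ_of_lt hi) (Nat.lt_succ_of_lt hj) hij) _)
        fun j hj ↦ hab j (Nat.lt_succ_of_lt hj)
    · exact hab n n.lt_succ_self

lemma sum_measure_disjointed {X : Type*} [MeasurableSpace X] {ν : Measure X}
    {B : ℕ → Set X} (hB : Monotone B) (hmeas : ∀ j, MeasurableSet (B j)) (n : ℕ) :
    ∑ j ∈ Finset.range (n + 1), ν (disjointed B j) = ν (B n) := by
  rw [← measure_biUnion_finset ((disjoint_disjointed B).set_pairwise _)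
    fun j _ ↦ MeasurableSet.disjointed hmeas j, biUnion_range_succ_disjointed, hB.partialSups_eq]

lemma lintegral_le_sum_mul_measure {X ι : Type*} [MeasurableSpace X] {ν : Measure X}
    {g : X → ℝ≥0∞} {s : Finset ι} {A : ι → Set X} {F : ι → ℝ≥0∞}
    (hmeas : ∀ i, MeasurableSet (A i)) (hcover : ∀ y, ∃ i ∈ s, y ∈ A i)
    (hg : ∀ i ∈ s, ∀ y ∈ A i, g y ≤ F i) :
    ∫⁻ y, g y ∂ν ≤ ∑ i ∈ s, F i * ν (A i) := by
  calc ∫⁻ y, g y ∂ν ≤ ∫⁻ y, ∑ i ∈ s, (A i).indicator (fun _ ↦ F i) y ∂ν := by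
        refine lintegral_mono fun y ↦ ?_
        obtain ⟨i, hi, hy⟩ := hcover y
        calc g y ≤ (A i).indicator (fun _ ↦ F i) y := by
              rw [Set.indicator_of_mem hy]
              exact hg i hi y hy
          _ ≤ _ := Finset.single_le_sum
              (f := fun i ↦ (A i).indicator (fun _ ↦ F i) y) (fun _ _ ↦ zero_le) hi
    _ = ∑ i ∈ s, F i * ν (A i) := by
        rw [lintegral_finsetSum _ fun i _ ↦ measurable_const.indicator (hmeas i)]
        simp only [lintegral_indicator_const (hmeas _)]

lemma lintegral_le_mul_sum_of_measure_closedBall_le {X : Type*} [PseudoMetricSpace X]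
    [MeasurableSpace X] [OpensMeasurableSpace X] {ν : Measure X} {x : X} {r : ℝ} {n : ℕ}
    {M : ℝ≥0∞} {F : ℕ → ℝ≥0∞} {g : X → ℝ≥0∞} (hF : AntitoneOn F (Set.Iio (n + 1)))
    (hball : ∀ j : ℕ, ν (Metric.closedBall x ((j + 1) * r)) ≤ (j + 1) * M)
    (hcover : ∀ y, dist y x ≤ (n + 1) * r)
    (hg : ∀ j < n + 1, ∀ y, j * r ≤ dist y x → g y ≤ F j) :
    ∫⁻ y, g y ∂ν ≤ M * ∑ j ∈ Finset.range (n + 1), F j := by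
  have hr : 0 ≤ r := nonneg_of_mul_nonneg_right
    ((dist_self x).symm.trans_le (hcover x)) (by positivity)
  set B : ℕ → Set X := fun j ↦ Metric.closedBall x ((j + 1) * r) with hB
  have hBmono : Monotone B := fun i j hij ↦ Metric.closedBall_subset_closedBall (by gcongr)
  have hBmeas (j : ℕ) : MeasurableSet (B j) := Metric.isClosed_closedBall.measurableSet
  have hannulus {j : ℕ} {y : X} (hy : y ∈ disjointed B j) : j * r ≤ dist y x := by
    cases j with
    | zero => simp
    | succ i =>
      rw [hBmono.disjointed_add_one] at hy
      simpa [hB] using (not_le.1 hy.2).le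
  have hdisjointed_cover (y : X) : ∃ j ∈ Finset.range (n + 1), y ∈ disjointed B j := by
    have hy : y ∈ B n := hcover y
    rw [← hBmono.partialSups_eq, ← biUnion_range_succ_disjointed] at hy
    simpa using hy
  calc ∫⁻ y, g y ∂ν
      ≤ ∑ j ∈ Finset.range (n + 1), F j * ν (disjointed B j) :=
        lintegral_le_sum_mul_measure (MeasurableSet.disjointed hBmeas) hdisjointed_cover
          fun j hj y hy ↦ hg j (Finset.mem_range.1 hj) y (hannulus hy)
    _ ≤ ∑ j ∈ Finset.range (n + 1), F j * M := by
        refine sum_mul_le_sum_mul_of_antitoneOn hF fun j _ ↦ ?_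
        rw [sum_measure_disjointed hBmono hBmeas]
        simpa using hball j
    _ = M * ∑ j ∈ Finset.range (n + 1), F j := by rw [← Finset.sum_mul, mul_comm]

lemma enorm_dirichletSum_mul_le {N L : ℕ} {c : ℝ} (hc : 0 ≤ c) {x : UnitAddCircle}
    (hx : c ≤ ‖x‖) : ‖dirichletSum L x‖ₑ * ‖dirichletSum N x‖ₑ ≤
      min (L * N : ℝ≥0∞) ((ENNReal.ofReal (Real.sin (π * c)))⁻¹ ^ 2) := by
  have hsin : Real.sin (π * c) ≤ Real.sin (π * ‖x‖) :=
    Real.sin_le_sin_of_le_of_le_pi_div_two (by nlinarith [Real.pi_pos])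
      (by nlinarith [Real.pi_pos, norm_unitAddCircle_le_half x]) (by gcongr)
  refine le_min (mul_le_mul' (enorm_dirichletSum_le_natCast L x)
    (enorm_dirichletSum_le_natCast N x)) ?_
  rw [sq]
  refine mul_le_mul' ?_ ?_ <;>
  exact (enorm_dirichletSum_le_inv_sin _ x).trans
    (ENNReal.inv_le_inv.2 (ENNReal.ofReal_le_ofReal hsin))

lemma sum_inv_ofReal_sin_sq_le {δ : ℝ} (hδ : 0 < δ) {J : ℕ} (hJ : J < 1 / δ) :
    ∑ j ∈ Finset.range J, (ENNReal.ofReal (Real.sin (π * ((j + 1 : ℕ) * (δ / 2)))))⁻¹ ^ 2 ≤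
      ENNReal.ofReal ((1 / δ) ^ 2) := by
  have hJδ : J * δ < 1 := (lt_div_iff₀ hδ).1 hJ
  have hterm {j : ℕ} (hj : j ∈ Finset.range J) :
      (ENNReal.ofReal (Real.sin (π * ((j + 1 : ℕ) * (δ / 2)))))⁻¹ ^ 2 =
        ENNReal.ofReal (Real.sin ((j + 1) * (π / (2 * (1 / δ)))) ^ 2)⁻¹ := by
    have harg : π * ((j + 1 : ℕ) * (δ / 2)) = (j + 1) * (π / (2 * (1 / δ))) := by
      push_cast; field_simp
    have hpos : 0 < Real.sin (π * ((j + 1 : ℕ) * (δ / 2))) := by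
      have : ((j + 1 : ℕ) : ℝ) * δ ≤ J * δ := by
        gcongr; exact Finset.mem_range.1 hj
      exact Real.sin_pos_of_pos_of_lt_pi (by positivity) (by nlinarith [Real.pi_pos])
    rw [← harg, ENNReal.ofReal_inv_of_pos (by positivity), ENNReal.ofReal_pow hpos.le,
      ENNReal.inv_pow]
  rw [Finset.sum_congr rfl fun _ ↦ hterm, ← ENNReal.ofReal_sum_of_nonneg fun _ _ ↦ by positivity]
  exact ENNReal.ofReal_le_ofReal (sum_inv_sin_sq_le_sq J hJ)

lemma lintegral_enorm_dirichletSum_mul_le {ν : Measure UnitAddCircle} {δ : ℝ} (hδ : 0 < δ)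
    {M : ℝ≥0∞} (hM : ∀ x, ν (Metric.closedBall x (δ / 2)) ≤ M) {J N : ℕ} (hJ : J < 1 / δ)
    (hJ' : 1 / δ ≤ J + 1) (x : UnitAddCircle) :
    ∫⁻ y, ‖dirichletSum (J + 1) (y - x)‖ₑ * ‖dirichletSum N (y - x)‖ₑ ∂ν ≤
      M * ENNReal.ofReal ((J + 1) * N + (1 / δ) ^ 2) := by
  set F : ℕ → ℝ≥0∞ := fun j ↦
    min ((J + 1 : ℕ) * N : ℝ≥0∞) ((ENNReal.ofReal (Real.sin (π * (j * (δ / 2)))))⁻¹ ^ 2)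
  have hJδ : J * δ < 1 := (lt_div_iff₀ hδ).1 hJ
  have hquarter {j : ℕ} (hj : j < J + 1) : π * (j * (δ / 2)) ≤ π / 2 := by
    have : (j : ℝ) * δ ≤ J * δ := by gcongr; exact Nat.le_of_lt_succ hj
    nlinarith [Real.pi_pos]
  have hF : AntitoneOn F (Set.Iio (J + 1)) := by
    intro i _ j hj hij
    have hpos : 0 ≤ π * (i * (δ / 2)) := by positivity
    have hsin := Real.sin_le_sin_of_le_of_le_pi_div_two (by linarith [Real.pi_pos]) (hquarter hj)
      (show π * (i * (δ / 2)) ≤ π * (j * (δ / 2)) by gcongr)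
    dsimp only [F]
    gcongr
  have hsum : ∑ j ∈ Finset.range (J + 1), F j ≤ ENNReal.ofReal ((J + 1) * N + (1 / δ) ^ 2) := by
    rw [Finset.sum_range_succ', add_comm, ENNReal.ofReal_add (by positivity) (by positivity)]
    refine add_le_add ((min_le_left _ _).trans_eq (by norm_cast))
      ((Finset.sum_le_sum fun _ _ ↦ min_le_right _ _).trans (sum_inv_ofReal_sin_sq_le hδ hJ))
  calc _ ≤ M * ∑ j ∈ Finset.range (J + 1), F j := by
        refine lintegral_le_mul_sum_of_measure_closedBall_le hF
          (fun j ↦ measure_closedBall_add_one_mul_le hM j x) (fun y ↦ ?_) fun j _ y hy ↦ ?_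
        · rw [dist_eq_norm]
          have := (div_le_iff₀ hδ).1 hJ'
          linarith [norm_unitAddCircle_le_half (y - x)]
        · exact enorm_dirichletSum_mul_le (by positivity) (by rwa [← dist_eq_norm])
    _ ≤ _ := by gcongr

lemma two_mul_mul_le_sq_add_sq (a b : ℝ≥0∞) : 2 * (a * b) ≤ a ^ 2 + b ^ 2 := by
  wlog hab : a ≤ b generalizing a b
  · simpa only [mul_comm, add_comm] using this b a (le_of_not_ge hab)
  obtain ⟨c, rfl⟩ := exists_add_of_le hab
  rw [show a ^ 2 + (a + c) ^ 2 = 2 * (a * (a + c)) + c ^ 2 by ring]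
  exact le_self_add

lemma lintegral_lintegral_mul_mul_le {X : Type*} [MeasurableSpace X] {ν : Measure X} [SFinite ν]
    {u : X → ℝ≥0∞} {k : X → X → ℝ≥0∞} {B : ℝ≥0∞} (hu : Measurable u)
    (hk : Measurable (Function.uncurry k)) (hsymm : ∀ x y, k x y = k y x)
    (hB : ∀ x, ∫⁻ y, k x y ∂ν ≤ B) :
    ∫⁻ x, ∫⁻ y, u x * u y * k x y ∂ν ∂ν ≤ B * ∫⁻ x, u x ^ 2 ∂ν := by
  have hkx (x : X) : Measurable (k x) := hk.comp measurable_prodMk_left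
  have hdiag : ∫⁻ x, ∫⁻ y, u x ^ 2 * k x y ∂ν ∂ν ≤ B * ∫⁻ x, u x ^ 2 ∂ν := by
    simp only [lintegral_const_mul _ (hkx _)]
    rw [← lintegral_const_mul _ (hu.pow_const 2)]
    refine lintegral_mono fun x ↦ ?_
    rw [mul_comm B]
    gcongr
    exact hB x
  have hswap : ∫⁻ x, ∫⁻ y, u y ^ 2 * k x y ∂ν ∂ν = ∫⁻ x, ∫⁻ y, u x ^ 2 * k x y ∂ν ∂ν := by
    rw [lintegral_lintegral_swap (by fun_prop)]
    simp only [hsymm]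
  refine (ENNReal.mul_le_mul_iff_right two_ne_zero ENNReal.ofNat_ne_top).1 ?_
  calc 2 * ∫⁻ x, ∫⁻ y, u x * u y * k x y ∂ν ∂ν
      = ∫⁻ x, ∫⁻ y, 2 * (u x * u y) * k x y ∂ν ∂ν := by
        simp only [mul_assoc (2 : ℝ≥0∞), lintegral_const_mul' 2 _ ENNReal.ofNat_ne_top]
    _ ≤ ∫⁻ x, ∫⁻ y, u x ^ 2 * k x y + u y ^ 2 * k x y ∂ν ∂ν := by
        refine lintegral_mono fun x ↦ lintegral_mono fun y ↦ ?_
        rw [← add_mul]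
        gcongr
        exact two_mul_mul_le_sq_add_sq _ _
    _ = ∫⁻ x, ∫⁻ y, u x ^ 2 * k x y ∂ν ∂ν + ∫⁻ x, ∫⁻ y, u y ^ 2 * k x y ∂ν ∂ν := by
        rw [← lintegral_add_left (by fun_prop)]
        exact lintegral_congr fun x ↦ lintegral_add_left ((hkx x).const_mul _) _
    _ ≤ 2 * (B * ∫⁻ x, u x ^ 2 ∂ν) := by
        rw [hswap, ← two_mul]
        gcongr

lemma sum_enorm_integral_sq_le {X ι : Type*} [MeasurableSpace X] {ν : Measure X} [SFinite ν]
    (s : Finset ι) {h : ι → X → ℂ} (hint : ∀ i ∈ s, Integrable (h i) ν) :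
    ∑ i ∈ s, ‖∫ x, h i x ∂ν‖ₑ ^ 2 ≤ ∫⁻ x, ∫⁻ y, ‖∑ i ∈ s, h i x * conj (h i y)‖ₑ ∂ν ∂ν := by
  have hprod (i) (hi : i ∈ s) : Integrable (fun z : X × X ↦ h i z.1 * conj (h i z.2)) (ν.prod ν) :=
    (hint i hi).mul_prod (Complex.conjCLE.integrable_comp_iff.2 (hint i hi))
  have hsum : ((∑ i ∈ s, ‖∫ x, h i x ∂ν‖ ^ 2 : ℝ) : ℂ) =
      ∫ z : X × X, ∑ i ∈ s, h i z.1 * conj (h i z.2) ∂ν.prod ν := by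
    rw [integral_finsetSum _ hprod]
    push_cast
    refine Finset.sum_congr rfl fun i _ ↦ ?_
    rw [integral_prod_mul (h i) fun y ↦ conj (h i y), integral_conj, Complex.mul_conj']
  calc ∑ i ∈ s, ‖∫ x, h i x ∂ν‖ₑ ^ 2 = ‖((∑ i ∈ s, ‖∫ x, h i x ∂ν‖ ^ 2 : ℝ) : ℂ)‖ₑ := by
        rw [← ofReal_norm, Complex.norm_of_nonneg (by positivity),
          ENNReal.ofReal_sum_of_nonneg fun _ _ ↦ by positivity]
        simp only [ENNReal.ofReal_pow (norm_nonneg _), ofReal_norm]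
    _ ≤ ∫⁻ z : X × X, ‖∑ i ∈ s, h i z.1 * conj (h i z.2)‖ₑ ∂ν.prod ν := by
        rw [hsum]
        exact enorm_integral_le_lintegral_enorm _
    _ = _ := lintegral_prod _
        (integrable_finsetSum _ hprod).aestronglyMeasurable.enorm

lemma sum_Icc_le_sum_range_shift (F : ℤ → ℝ≥0∞) (m : ℤ) (n : ℕ) {J p : ℕ} (hp : p ≤ J) :
    ∑ k ∈ Finset.Icc (m + 1) (m + n), F k ≤ ∑ q ∈ Finset.range (n + J), F (m + 1 + q - p) := by
  have hinj : Function.Injective fun q : ℕ ↦ m + 1 + q - p := fun q q' h ↦ by simpa using h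
  rw [← Finset.sum_image (f := F) hinj.injOn]
  refine Finset.sum_le_sum_of_subset fun k hk ↦ Finset.mem_image.2 ⟨(k - m - 1 + p).toNat, ?_⟩
  rw [Finset.mem_Icc] at hk
  rw [Finset.mem_range]
  omega

lemma dirichletSum_neg (N : ℕ) (x : UnitAddCircle) :
    dirichletSum N (-x) = conj (dirichletSum N x) := by
  simp only [dirichletSum, map_sum, fourier_apply, smul_neg, AddCircle.toCircle_neg,
    Circle.coe_inv_eq_conj]

lemma sum_sum_fourier_mul_conj (m : ℤ) (L N : ℕ) (x y : UnitAddCircle) :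
    ∑ p ∈ Finset.range L, ∑ q ∈ Finset.range N,
      conj (fourier (m + q - p) x) * fourier (m + q - p) y =
    fourier m (y - x) * (conj (dirichletSum L (y - x)) * dirichletSum N (y - x)) := by
  have hterm (k : ℤ) : conj (fourier k x) * fourier k y = fourier k (y - x) := by
    simp [fourier_apply, sub_eq_add_neg, AddCircle.toCircle_add, mul_comm]
  simp only [hterm]
  simp only [dirichletSum, map_sum, Finset.sum_mul_sum, ← fourier_neg]
  simp only [Finset.mul_sum]
  refine Finset.sum_congr rfl fun p _ ↦ Finset.sum_congr rfl fun q _ ↦ ?_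
  rw [← fourier_add, ← fourier_add]
  congr 2
  ring

lemma sum_sum_enorm_integral_mul_conj_fourier_sq_le {ν : Measure UnitAddCircle}
    [IsFiniteMeasure ν] (g : C(UnitAddCircle, ℂ)) (m : ℤ) (L N : ℕ) {B : ℝ≥0∞}
    (hB : ∀ x, ∫⁻ y, ‖dirichletSum L (y - x)‖ₑ * ‖dirichletSum N (y - x)‖ₑ ∂ν ≤ B) :
    ∑ p ∈ Finset.range L, ∑ q ∈ Finset.range N,
      ‖∫ x, g x * conj (fourier (m + q - p) x) ∂ν‖ₑ ^ 2 ≤ B * ∫⁻ x, ‖g x‖ₑ ^ 2 ∂ν := by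
  set k : UnitAddCircle → UnitAddCircle → ℝ≥0∞ := fun x y ↦
    ‖dirichletSum L (y - x)‖ₑ * ‖dirichletSum N (y - x)‖ₑ
  have hD := continuous_dirichletSum
  have hsymm (x y) : k x y = k y x := by
    simp only [k]
    rw [← neg_sub x y, dirichletSum_neg, dirichletSum_neg]
    simp
  rw [← Finset.sum_product']
  calc _ ≤ _ := sum_enorm_integral_sq_le _ fun i _ ↦ ?_
    _ = ∫⁻ x, ∫⁻ y, ‖g x‖ₑ * ‖g y‖ₑ * k x y ∂ν ∂ν := ?_
    _ ≤ _ := lintegral_lintegral_mul_mul_le (by fun_prop) (by fun_prop) hsymm hB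
  · exact Continuous.integrable_of_hasCompactSupport (by fun_prop) (.of_compactSpace _)
  · refine lintegral_congr fun x ↦ lintegral_congr fun y ↦ ?_
    have hfactor := sum_sum_fourier_mul_conj m L N x y
    rw [← Finset.sum_product'] at hfactor
    simp only [map_mul, Complex.conj_conj]
    calc _ = ‖g x * conj (g y) * ∑ i ∈ Finset.range L ×ˢ Finset.range N,
          conj (fourier (m + i.2 - i.1) x) * fourier (m + i.2 - i.1) y‖ₑ := by
          rw [Finset.mul_sum]
          congr! 2
          ring
      _ = _ := by
          simp only [hfactor, enorm_mul, RCLike.enorm_conj, enorm_fourier_apply, one_mul, k]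

lemma exists_nat_lt_le_add_one {R : Type*} [Semiring R] [LinearOrder R] [IsStrictOrderedRing R]
    [FloorSemiring R] {κ : R} (hκ : 0 < κ) : ∃ J : ℕ, J < κ ∧ κ ≤ J + 1 := by
  obtain ⟨J, hJ⟩ := Nat.exists_eq_add_one.2 (Nat.ceil_pos.2 hκ)
  refine ⟨J, Nat.lt_ceil.1 (by omega), ?_⟩
  exact_mod_cast hJ ▸ Nat.le_ceil κ

lemma sum_enorm_integral_mul_conj_fourier_sq_le {ν : Measure UnitAddCircle} [IsFiniteMeasure ν]
    {δ : ℝ} (hδ : 0 < δ) {M : ℝ≥0∞} (hM : ∀ x, ν (Metric.closedBall x (δ / 2)) ≤ M)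
    (g : C(UnitAddCircle, ℂ)) (m : ℤ) (n : ℕ) :
    ∑ k ∈ Finset.Icc (m + 1) (m + n), ‖∫ x, g x * conj (fourier k x) ∂ν‖ₑ ^ 2 ≤
      ENNReal.ofReal (n + 2 / δ) * M * ∫⁻ x, ‖g x‖ₑ ^ 2 ∂ν := by
  obtain ⟨J, hJ, hJ'⟩ := exists_nat_lt_le_add_one (one_div_pos.2 hδ)
  have hrepeat : (J + 1 : ℝ≥0∞) *
      ∑ k ∈ Finset.Icc (m + 1) (m + n), ‖∫ x, g x * conj (fourier k x) ∂ν‖ₑ ^ 2 ≤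
      ∑ p ∈ Finset.range (J + 1), ∑ q ∈ Finset.range (n + J),
        ‖∫ x, g x * conj (fourier (m + 1 + q - p) x) ∂ν‖ₑ ^ 2 := by
    calc _ = ∑ p ∈ Finset.range (J + 1), ∑ k ∈ Finset.Icc (m + 1) (m + n),
          ‖∫ x, g x * conj (fourier k x) ∂ν‖ₑ ^ 2 := by simp
      _ ≤ _ := Finset.sum_le_sum fun p hp ↦ sum_Icc_le_sum_range_shift
          (fun k ↦ ‖∫ x, g x * conj (fourier k x) ∂ν‖ₑ ^ 2) m n
          (Finset.mem_range_succ_iff.1 hp)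
  have hconst : (J + 1) * (n + J : ℕ) + (1 / δ) ^ 2 ≤ (J + 1) * (n + 2 / δ) := by
    have : 0 < 1 / δ := by positivity
    rw [← mul_one_div 2 δ]
    push_cast
    nlinarith
  refine (ENNReal.mul_le_mul_iff_right (a := J + 1) (by simp) (by simp)).1 ?_
  calc _ ≤ M * ENNReal.ofReal ((J + 1) * (n + J : ℕ) + (1 / δ) ^ 2) * ∫⁻ x, ‖g x‖ₑ ^ 2 ∂ν :=
        hrepeat.trans (sum_sum_enorm_integral_mul_conj_fourier_sq_le g (m + 1) (J + 1) (n + J)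
          (lintegral_enorm_dirichletSum_mul_le hδ hM hJ hJ'))
    _ ≤ M * ENNReal.ofReal ((J + 1) * (n + 2 / δ)) * ∫⁻ x, ‖g x‖ₑ ^ 2 ∂ν := by gcongr
    _ = _ := by
        rw [ENNReal.ofReal_mul (by positivity), ENNReal.ofReal_add (by positivity) zero_le_one,
          ENNReal.ofReal_natCast, ENNReal.ofReal_one]
        ring

lemma enorm_sq_sum_smul_le_of_sum_enorm_inner_sq_le {𝕜 E ι : Type*} [RCLike 𝕜]
    [NormedAddCommGroup E] [InnerProductSpace 𝕜 E] {s : Finset ι} {v : ι → E} (a : ι → 𝕜) {B : ℝ≥0∞}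
    (hB : ∑ i ∈ s, ‖⟪v i, ∑ j ∈ s, a j • v j⟫_𝕜‖ₑ ^ 2 ≤ B * ‖∑ i ∈ s, a i • v i‖ₑ ^ 2) :
    ‖∑ i ∈ s, a i • v i‖ₑ ^ 2 ≤ B * ∑ i ∈ s, ‖a i‖ₑ ^ 2 := by
  set g : E := ∑ i ∈ s, a i • v i with hg
  have hself : ‖g‖₊ ^ 2 ≤ ∑ i ∈ s, ‖a i‖₊ * ‖⟪v i, g⟫_𝕜‖₊ :=
    calc ‖g‖₊ ^ 2 = ‖⟪g, g⟫_𝕜‖₊ := by rw [inner_self_eq_norm_sq_to_K]; simp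
      _ = ‖∑ i ∈ s, conj (a i) * ⟪v i, g⟫_𝕜‖₊ := by
        conv_lhs => rw [hg, sum_inner, ← hg]
        simp only [inner_smul_left]
      _ ≤ _ := (nnnorm_sum_le _ _).trans_eq (by simp)
  have hsq : (‖g‖ₑ ^ 2) ^ 2 ≤ (∑ i ∈ s, ‖a i‖ₑ ^ 2) * ∑ i ∈ s, ‖⟪v i, g⟫_𝕜‖ₑ ^ 2 := by
    simp only [enorm_eq_nnnorm]
    exact_mod_cast (pow_le_pow_left₀ zero_le hself 2).trans (Finset.sum_mul_sq_le_sq_mul_sq ..)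
  obtain hg0 | hg0 := eq_or_ne (‖g‖ₑ ^ 2) 0
  · simp [hg0]
  refine (ENNReal.mul_le_mul_iff_right hg0 (by simp)).1 ?_
  calc ‖g‖ₑ ^ 2 * ‖g‖ₑ ^ 2 ≤ (∑ i ∈ s, ‖a i‖ₑ ^ 2) * (B * ‖g‖ₑ ^ 2) := by
        rw [← sq]
        exact hsq.trans (by gcongr)
    _ = _ := by ring

lemma enorm_sq_sum_smul_of_orthonormal {𝕜 E ι : Type*} [RCLike 𝕜] [NormedAddCommGroup E]
    [InnerProductSpace 𝕜 E] {v : ι → E} (hv : Orthonormal 𝕜 v) (s : Finset ι) (a : ι → 𝕜) :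
    ‖∑ i ∈ s, a i • v i‖ₑ ^ 2 = ∑ i ∈ s, ‖a i‖ₑ ^ 2 := by
  have hnorm : ‖∑ i ∈ s, a i • v i‖ ^ 2 = ∑ i ∈ s, ‖a i‖ ^ 2 := by
    have h := hv.inner_sum a a s
    simp only [inner_self_eq_norm_sq_to_K, RCLike.conj_mul] at h
    exact_mod_cast h
  simp only [← ofReal_norm, ← ENNReal.ofReal_pow (norm_nonneg _)]
  rw [hnorm, ENNReal.ofReal_sum_of_nonneg fun _ _ ↦ by positivity]

lemma enorm_toLp_sq {𝕜 X : Type*} [RCLike 𝕜] [TopologicalSpace X] [CompactSpace X]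
    [MeasurableSpace X] [BorelSpace X] {ν : Measure X} [IsFiniteMeasure ν] (g : C(X, 𝕜)) :
    ‖ContinuousMap.toLp 2 ν 𝕜 g‖ₑ ^ 2 = ∫⁻ x, ‖g x‖ₑ ^ 2 ∂ν := by
  rw [Lp.enorm_def, eLpNorm_congr_ae (ContinuousMap.coeFn_toLp ν g)]
  simpa using eLpNorm_nnreal_pow_eq_lintegral (f := g) (μ := ν) (p := 2) two_ne_zero

/-- The trigonometric polynomial `∑_{k ∈ s} a_k e(kx)`, as a continuous function on `ℝ/ℤ`. -/
noncomputable def trigPolynomial (s : Finset ℤ) (a : ℤ → ℂ) : C(UnitAddCircle, ℂ) :=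
  ∑ k ∈ s, a k • fourier k

lemma toLp_trigPolynomial (ν : Measure UnitAddCircle) [IsFiniteMeasure ν] (s : Finset ℤ)
    (a : ℤ → ℂ) : ContinuousMap.toLp 2 ν ℂ (trigPolynomial s a) =
      ∑ k ∈ s, a k • ContinuousMap.toLp 2 ν ℂ (fourier k) := by
  simp only [trigPolynomial, map_sum, map_smul]

lemma lintegral_enorm_trigPolynomial_sq (s : Finset ℤ) (a : ℤ → ℂ) :
    ∫⁻ x, ‖trigPolynomial s a x‖ₑ ^ 2 = ∑ k ∈ s, ‖a k‖ₑ ^ 2 := by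
  rw [AddCircle.volume_eq_smul_haarAddCircle, ENNReal.ofReal_one, one_smul, ← enorm_toLp_sq,
    toLp_trigPolynomial]
  exact enorm_sq_sum_smul_of_orthonormal orthonormal_fourier s a

lemma lintegral_enorm_trigPolynomial_sq_le_of_isFiniteMeasure {ν : Measure UnitAddCircle}
    [IsFiniteMeasure ν] {δ : ℝ} (hδ : 0 < δ) {M : ℝ≥0∞}
    (hM : ∀ x, ν (Metric.closedBall x (δ / 2)) ≤ M) (m : ℤ) (n : ℕ) (a : ℤ → ℂ) :
    ∫⁻ x, ‖trigPolynomial (Finset.Icc (m + 1) (m + n)) a x‖ₑ ^ 2 ∂ν ≤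
      ENNReal.ofReal (n + 2 / δ) * M *
        ∫⁻ x, ‖trigPolynomial (Finset.Icc (m + 1) (m + n)) a x‖ₑ ^ 2 := by
  rw [lintegral_enorm_trigPolynomial_sq, ← enorm_toLp_sq, toLp_trigPolynomial]
  refine enorm_sq_sum_smul_le_of_sum_enorm_inner_sq_le a ?_
  rw [← toLp_trigPolynomial, enorm_toLp_sq]
  simp only [ContinuousMap.inner_toLp]
  exact sum_enorm_integral_mul_conj_fourier_sq_le hδ hM _ m n

lemma isFiniteMeasure_of_measure_closedBall_le {ν : Measure UnitAddCircle} {r : ℝ} (hr : 0 < r)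
    {M : ℝ≥0∞} (hMtop : M ≠ ⊤) (hM : ∀ x, ν (Metric.closedBall x r) ≤ M) : IsFiniteMeasure ν := by
  obtain ⟨J, hJ⟩ := exists_nat_ge (1 / r)
  have hball : Metric.closedBall (0 : UnitAddCircle) ((J + 1) * r) = Set.univ := by
    refine AddCircle.closedBall_eq_univ_of_half_period_le 1 one_ne_zero 0 ?_
    rw [abs_one]
    linarith [(div_le_iff₀ hr).1 hJ]
  refine ⟨?_⟩
  rw [← hball]
  exact (measure_closedBall_add_one_mul_le hM J 0).trans_lt (by finiteness)

theorem lintegral_enorm_trigPolynomial_sq_le {ν : Measure UnitAddCircle} {δ : ℝ} (hδ : 0 < δ)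
    {M : ℝ≥0∞} (hM : ∀ x, ν (Metric.closedBall x (δ / 2)) ≤ M) (m : ℤ) (n : ℕ) (a : ℤ → ℂ) :
    ∫⁻ x, ‖trigPolynomial (Finset.Icc (m + 1) (m + n)) a x‖ₑ ^ 2 ∂ν ≤
      ENNReal.ofReal (n + 2 / δ) * M *
        ∫⁻ x, ‖trigPolynomial (Finset.Icc (m + 1) (m + n)) a x‖ₑ ^ 2 := by
  obtain rfl | hMtop := eq_or_ne M ⊤
  · obtain hzero | hpos :=
      eq_or_ne (∫⁻ x, ‖trigPolynomial (Finset.Icc (m + 1) (m + n)) a x‖ₑ ^ 2) 0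
    · have ha : ∀ k ∈ Finset.Icc (m + 1) (m + n), a k = 0 := by
        simpa [lintegral_enorm_trigPolynomial_sq, Finset.sum_eq_zero_iff] using hzero
      have hP : trigPolynomial (Finset.Icc (m + 1) (m + n)) a = 0 :=
        Finset.sum_eq_zero fun k hk ↦ by rw [ha k hk]; exact zero_smul ℂ (fourier k)
      simp [hP]
    · have hconst : ENNReal.ofReal (n + 2 / δ) ≠ 0 := by
        rw [Ne, ENNReal.ofReal_eq_zero, not_le]; positivity
      rw [ENNReal.mul_top hconst, ENNReal.top_mul hpos]
      exact le_top
  · have := isFiniteMeasure_of_measure_closedBall_le (half_pos hδ) hMtop hM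
    exact lintegral_enorm_trigPolynomial_sq_le_of_isFiniteMeasure hδ hM m n a

lemma vaddInvariantMeasure_zmultiples {G : Type*} [AddGroup G] [MeasurableSpace G]
    [MeasurableAdd G] {μ : Measure G} {t : G} (ht : MeasurePreserving (t + ·) μ μ) :
    VAddInvariantMeasure (AddSubgroup.zmultiples t) G μ := by
  have hpreserving (g : G) (hg : g ∈ AddSubgroup.zmultiples t) : MeasurePreserving (g + ·) μ μ := by
    rw [AddSubgroup.zmultiples_eq_closure] at hg
    induction hg using AddSubgroup.closure_induction with
    | mem x hx => rwa [Set.mem_singleton_iff.1 hx]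
    | zero => simpa using! MeasurePreserving.id μ
    | add x y _ _ hx hy => simpa only [Function.comp_def, add_assoc] using hx.comp hy
    | neg x _ hx => exact MeasurePreserving.symm (MeasurableEquiv.addLeft x) hx
  exact ⟨fun g _ hs ↦ (hpreserving g g.2).measure_preimage hs.nullMeasurableSet⟩

lemma isAddFundamentalDomain_Ico {t : ℝ} (ht : 0 < t) (c : ℝ) (μ : Measure ℝ) :
    IsAddFundamentalDomain (AddSubgroup.zmultiples t) (Set.Ico c (c + t)) μ := by
  refine IsAddFundamentalDomain.mk' nullMeasurableSet_Ico fun x ↦ ?_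
  have hbij : Function.Bijective
      (Set.codRestrict (· • t) (AddSubgroup.zmultiples t) fun n : ℤ ↦ ⟨n, rfl⟩) :=
    (Equiv.ofInjective _ (zsmul_left_strictMono ht).injective).bijective
  refine hbij.existsUnique_iff.2 ?_
  simpa only [add_comm x] using! existsUnique_add_zsmul_mem_Ico ht x c

/-- The measure on `ℝ/ℤ` of which a 1-periodic measure `μ` on `ℝ` is the lift: the image of the
restriction of `μ` to the period `[0, 1)`. -/
noncomputable def circleMeasure (μ : Measure ℝ) : Measure UnitAddCircle :=
  (μ.restrict (Set.Ico 0 1)).map (↑)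

lemma circleMeasure_volume : circleMeasure volume = volume := by
  have h := (UnitAddCircle.measurePreserving_mk 0).map_eq
  rwa [zero_add, ← Measure.restrict_congr_set Ico_ae_eq_Ioc] at h

lemma lintegral_circleMeasure (μ : Measure ℝ) {g : UnitAddCircle → ℝ≥0∞} (hg : Measurable g) :
    ∫⁻ x, g x ∂circleMeasure μ = ∫⁻ t in Set.Ico 0 1, g t ∂μ :=
  lintegral_map hg AddCircle.measurable_mk'

lemma circleMeasure_closedBall_le {μ : Measure ℝ} (hper : μ.map (· + 1) = μ) (t r : ℝ) :
    circleMeasure μ (Metric.closedBall t r) ≤ μ (Set.Icc (t - r) (t + r)) := by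
  have : VAddInvariantMeasure (AddSubgroup.zmultiples (1 : ℝ)) ℝ μ :=
    vaddInvariantMeasure_zmultiples ⟨measurable_const_add 1, by simpa only [add_comm] using hper⟩
  have hmeas : MeasurableSet (Metric.closedBall (t : UnitAddCircle) r) :=
    Metric.isClosed_closedBall.measurableSet
  set A : Set ℝ := (↑) ⁻¹' Metric.closedBall (t : UnitAddCircle) r
  have hA : MeasurableSet A := AddCircle.measurable_mk' hmeas
  have hinv (g : AddSubgroup.zmultiples (1 : ℝ)) : (g +ᵥ ·) ⁻¹' A = A := by
    have hg : ((g : ℝ) : UnitAddCircle) = 0 := (QuotientAddGroup.eq_zero_iff _).2 g.2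
    ext x
    simp only [A, Set.mem_preimage, AddSubgroup.vadd_def, vadd_eq_add, AddCircle.coe_add, hg,
      zero_add]
  have hperiod : Set.Ico (t - 1 / 2) (t - 1 / 2 + 1) ⊆ Metric.closedBall t (|1| / 2) := by
    rw [abs_one, Real.closedBall_eq_Icc]
    exact Set.Ico_subset_Icc_self.trans (Set.Icc_subset_Icc_right (by linarith))
  calc circleMeasure μ (Metric.closedBall t r) = μ (A ∩ Set.Ico 0 (0 + 1)) := by
        rw [circleMeasure, Measure.map_apply AddCircle.measurable_mk' hmeas,
          Measure.restrict_apply hA, zero_add]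
    _ = μ (A ∩ Set.Ico (t - 1 / 2) (t - 1 / 2 + 1)) :=
        (isAddFundamentalDomain_Ico one_pos _ μ).measure_set_eq
          (isAddFundamentalDomain_Ico one_pos _ μ) hA hinv
    _ ≤ μ (Metric.closedBall t r) := by
        rw [AddCircle.coe_real_preimage_closedBall_inter_eq 1 _ hperiod]
        refine measure_mono ?_
        split_ifs with hr
        · exact Set.inter_subset_left
        · exact hperiod.trans (Metric.closedBall_subset_closedBall (not_lt.1 hr))
    _ = μ (Set.Icc (t - r) (t + r)) := by rw [Real.closedBall_eq_Icc]

lemma trigPolynomial_coe (s : Finset ℤ) (a : ℤ → ℂ) (t : ℝ) :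
    trigPolynomial s a t = ∑ k ∈ s, a k * Complex.exp (2 * π * Complex.I * k * t) := by
  simp only [trigPolynomial, ContinuousMap.coe_sum, Finset.sum_apply, ContinuousMap.coe_smul,
    Pi.smul_apply, smul_eq_mul, fourier_coe_apply, Complex.ofReal_one, div_one]

theorem bombieri_large_sieve_general
    (μ : Measure ℝ) (hper : Measure.map (fun x : ℝ => x + 1) μ = μ)
    (δ : ℝ) (hδ0 : 0 < δ)
    (m : ℤ) (n : ℕ) (a : ℤ → ℂ)
    (f : ℝ → ℂ)
    (hf : ∀ α : ℝ, f α = ∑ k ∈ Finset.Icc (m + 1) (m + n),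
      a k * Complex.exp (2 * Real.pi * Complex.I * k * α)) :
    (∫⁻ α in Set.Ico (0 : ℝ) 1, (‖f α‖₊ : ENNReal) ^ 2 ∂μ) ≤
      ENNReal.ofReal ((n : ℝ) + 2 / δ) * (⨆ α : ℝ, μ (Set.Icc α (α + δ))) *
        ∫⁻ α in Set.Ico (0 : ℝ) 1, (‖f α‖₊ : ENNReal) ^ 2 ∂volume := by
  set P := trigPolynomial (Finset.Icc (m + 1) (m + n)) a
  have hfP : f = fun α : ℝ ↦ P α := funext fun α ↦ by rw [hf, trigPolynomial_coe]
  have hlift (ν : Measure ℝ) : ∫⁻ α in Set.Ico (0 : ℝ) 1, (‖f α‖₊ : ℝ≥0∞) ^ 2 ∂ν =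
      ∫⁻ x, ‖P x‖ₑ ^ 2 ∂circleMeasure ν := by
    rw [hfP, lintegral_circleMeasure ν (by fun_prop)]
    rfl
  have harc (x : UnitAddCircle) :
      circleMeasure μ (Metric.closedBall x (δ / 2)) ≤ ⨆ α : ℝ, μ (Set.Icc α (α + δ)) := by
    obtain ⟨t, rfl⟩ := QuotientAddGroup.mk_surjective x
    refine (circleMeasure_closedBall_le hper t (δ / 2)).trans ?_
    rw [show t + δ / 2 = t - δ / 2 + δ by ring]
    exact le_iSup (fun α : ℝ ↦ μ (Set.Icc α (α + δ))) (t - δ / 2)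
  rw [hlift, hlift, circleMeasure_volume]
  exact lintegral_enorm_trigPolynomial_sq_le hδ0 harc m n a

/-- **Bombieri's large sieve inequality.** Let `μ` be a nonnegative
1-periodic Borel measure on `ℝ`, `0 < δ ≤ 1`, and let
`f(α) = ∑_{k=m+1}^{m+n} a_k e^{2πikα}` be a trigonometric polynomial.  Then
`∫_{[0,1)} |f|² dμ ≤ (n + 2/δ) · (sup_α μ([α, α+δ])) · ∫_0^1 |f|² dα`,
the last integral being with respect to Lebesgue measure. -/
theorem bombieri_large_sieve
    (μ : Measure ℝ) (hper : Measure.map (fun x : ℝ => x + 1) μ = μ)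
    (δ : ℝ) (hδ0 : 0 < δ) (hδ1 : δ ≤ 1)
    (m : ℤ) (n : ℕ) (a : ℤ → ℂ)
    (f : ℝ → ℂ)
    (hf : ∀ α : ℝ, f α = ∑ k ∈ Finset.Icc (m + 1) (m + n),
      a k * Complex.exp (2 * Real.pi * Complex.I * k * α)) :
    (∫⁻ α in Set.Ico (0 : ℝ) 1, (‖f α‖₊ : ENNReal) ^ 2 ∂μ) ≤
      ENNReal.ofReal ((n : ℝ) + 2 / δ) * (⨆ α : ℝ, μ (Set.Icc α (α + δ))) *
        ∫⁻ α in Set.Ico (0 : ℝ) 1, (‖f α‖₊ : ENNReal) ^ 2 ∂volume :=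
  bombieri_large_sieve_general μ hper δ hδ0 m n a f hf
end

section
/- (Donoho–Logan large sieve for Paley–Wiener) Let W > 0 and let f ∈ L¹(ℝ) have distributional Fourier transform supported in [−πW, πW]. Define the maximum Nyquist density ρ_ℝ(Ω,W) = W · sup_{t∈ℝ} |Ω ∩ [t, t+1/W]| for a measurable set Ω ⊆ ℝ, where |·| denotes Lebesgue measure. Then ∫_Ω |f(t)| dt ≤ (π/2) · ρ_ℝ(Ω,W) · ∫_ℝ |f(t)| dt. In particular, if ρ_ℝ(Ω,W) < 1/π then ‖f·χ_Ω‖₁ < (1/2)‖f‖₁. -/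
open MeasureTheory

/-!
Let `k` be `W` times the indicator of `[-1/(2W), 1/(2W)]`. In the normalization
`𝓕 f w = ∫ f t e^{-2πitw} dt` its Fourier transform is `sinc (πw/W)`, which does not vanish on the
band `[-W/2, W/2]` carrying `𝓕 f`. Expanding `1 / sinc` on `[-π/2, π/2]` into a Fourier series with
coefficients `c n`, the function `u = ∑ n, c n • f (· + n/W)` satisfies `𝓕 k • 𝓕 u = 𝓕 f`, so `f` is
the convolution `k ⋆ u` almost everywhere.

Convolution with `k` costs exactly the Nyquist density: by Tonelli, `∫_Ω |k ⋆ u|` is at most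
`W · sup_t |Ω ∩ [t, t + 1/W]| · ‖u‖₁`. The constant comes from `‖u‖₁ ≤ ∑ n, |c n| · ‖f‖₁`: since
`1 / sinc` is even and convex, integrating by parts twice shows that its Fourier series at the
endpoint `π/2` has nonnegative terms, whence `∑ n, |c n| = 1 / sinc (π/2) = π/2`.
-/

section FourierSeries

open Complex Set

theorem addCircle_coe_right_eq_coe_left (a b : ℝ) : (b : AddCircle (b - a)) = a := by
  rw [← sub_eq_zero, ← AddCircle.coe_sub, AddCircle.coe_period]

variable {a b : ℝ} (hab : a < b)

theorem hasSum_fourierCoeffOn_mul_fourier {f : ℝ → ℂ} (hf : ContinuousOn f (Icc a b))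
    (hfab : f a = f b) (hsum : Summable (fourierCoeffOn hab f)) {x : ℝ} (hx : x ∈ Icc a b) :
    HasSum (fun n ↦ fourierCoeffOn hab f n * fourier n (x : AddCircle (b - a))) (f x) := by
  have : Fact (0 < b - a) := ⟨sub_pos.2 hab⟩
  have hb : a + (b - a) = b := by ring
  let F : C(AddCircle (b - a), ℂ) := ⟨AddCircle.liftIoc (b - a) a f,
    AddCircle.liftIoc_continuous (by rwa [hb]) (by rwa [hb])⟩
  have hFx : F x = f x := by
    rcases hx.1.eq_or_lt with rfl | hax
    · rw [hfab, ← addCircle_coe_right_eq_coe_left a b]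
      exact AddCircle.liftIoc_coe_apply ⟨hab, hb.ge⟩
    · exact AddCircle.liftIoc_coe_apply ⟨hax, hx.2.trans hb.ge⟩
  rw [← hFx]
  exact has_pointwise_sum_fourier_series_of_summable (f := F) hsum x

theorem fourier_mul_fourierCoeffOn (f : ℝ → ℂ) (n : ℤ) :
    fourier n (a : AddCircle (b - a)) * fourierCoeffOn hab f n =
      1 / (b - a) * ∫ x in a..b, fourier n ((a - x : ℝ) : AddCircle (b - a)) * f x := by
  rw [fourierCoeffOn_eq_integral, real_smul, mul_left_comm, ← intervalIntegral.integral_const_mul]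
  push_cast
  simp only [smul_eq_mul, ← mul_assoc, fourier_apply, sub_eq_add_neg, AddCircle.coe_add,
    AddCircle.coe_neg, smul_add, smul_neg, neg_smul, AddCircle.toCircle_add, Circle.coe_mul]

theorem fourier_mul_fourierCoeffOn_of_hasDerivAt_of_hasDerivAt {f f' f'' : ℝ → ℂ} {n : ℤ}
    (hn : n ≠ 0) (hf : ∀ x ∈ Icc a b, HasDerivAt f (f' x) x)
    (hf' : ∀ x ∈ Icc a b, HasDerivAt f' (f'' x) x) (hf'' : IntervalIntegrable f'' volume a b)
    (hfab : f a = f b) :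
    fourier n (a : AddCircle (b - a)) * fourierCoeffOn hab f n =
      (b - a) / (2 * Real.pi * n) ^ 2 *
        ∫ x in a..b, (1 - fourier n ((a - x : ℝ) : AddCircle (b - a))) * f'' x := by
  have hba : (b - a : ℂ) ≠ 0 := by exact_mod_cast (sub_pos.2 hab).ne'
  rw [← uIcc_of_le hab.le] at hf hf'
  have hf'i : IntervalIntegrable f' volume a b :=
    ContinuousOn.intervalIntegrable fun x hx ↦ (hf' x hx).continuousAt.continuousWithinAt
  have hunit : fourier n (a : AddCircle (b - a)) * fourier (-n) (a : AddCircle (b - a)) = 1 := by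
    rw [← fourier_add, add_neg_cancel, fourier_zero]
  have hint : IntervalIntegrable
      (fun x ↦ fourier n ((a - x : ℝ) : AddCircle (b - a)) * f'' x) volume a b :=
    hf''.continuousOn_mul (by fun_prop)
  have hcoeff : ∫ x in a..b, fourier n ((a - x : ℝ) : AddCircle (b - a)) * f'' x =
      (b - a) * (fourier n (a : AddCircle (b - a)) * fourierCoeffOn hab f'' n) := by
    rw [fourier_mul_fourierCoeffOn hab]
    field_simp
  simp_rw [sub_mul, one_mul]
  rw [intervalIntegral.integral_sub hf'' hint, hcoeff,
    intervalIntegral.integral_eq_sub_of_hasDerivAt hf' hf'',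
    fourierCoeffOn_of_hasDerivAt hab hn hf hf'i, fourierCoeffOn_of_hasDerivAt hab hn hf' hf'',
    hfab, sub_self, mul_zero, zero_sub]
  have hn' : (n : ℂ) ≠ 0 := by exact_mod_cast hn
  field_simp
  simp only [I_sq]
  linear_combination (-(f' b - f' a)) * hunit

theorem summable_fourierCoeffOn_of_hasDerivAt_of_hasDerivAt {f f' f'' : ℝ → ℂ}
    (hf : ∀ x ∈ Icc a b, HasDerivAt f (f' x) x) (hf' : ∀ x ∈ Icc a b, HasDerivAt f' (f'' x) x)
    (hf'' : IntervalIntegrable f'' volume a b) (hfab : f a = f b) :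
    Summable (fourierCoeffOn hab f) := by
  have hbound (n : ℤ) (hn : n ≠ 0) : ‖fourierCoeffOn hab f n‖ ≤
      (b - a) / (2 * Real.pi) ^ 2 * (∫ x in a..b, 2 * ‖f'' x‖) * (1 / (n : ℝ) ^ 2) := by
    have hint : ‖∫ x in a..b, (1 - fourier n ((a - x : ℝ) : AddCircle (b - a))) * f'' x‖ ≤
        ∫ x in a..b, 2 * ‖f'' x‖ := by
      refine intervalIntegral.norm_integral_le_of_norm_le hab.le (ae_of_all _ fun x _ ↦ ?_)
        (hf''.norm.const_mul 2)
      rw [norm_mul]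
      gcongr
      refine (norm_sub_le _ _).trans_eq ?_
      rw [norm_one, fourier_apply, Circle.norm_coe, one_add_one_eq_two]
    calc
      _ = ‖fourier n (a : AddCircle (b - a)) * fourierCoeffOn hab f n‖ := by
        rw [norm_mul, fourier_apply, Circle.norm_coe, one_mul]
      _ = (b - a) / (2 * Real.pi * n) ^ 2 *
          ‖∫ x in a..b, (1 - fourier n ((a - x : ℝ) : AddCircle (b - a))) * f'' x‖ := by
        rw [fourier_mul_fourierCoeffOn_of_hasDerivAt_of_hasDerivAt hab hn hf hf' hf'' hfab,
          norm_mul]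
        congr 1
        rw [← ofReal_sub, ← ofReal_ofNat, ← ofReal_intCast, ← ofReal_mul, ← ofReal_mul,
          ← ofReal_pow, ← ofReal_div, norm_real,
          Real.norm_of_nonneg (div_nonneg (sub_nonneg.2 hab.le) (sq_nonneg _))]
      _ ≤ (b - a) / (2 * Real.pi * n) ^ 2 * ∫ x in a..b, 2 * ‖f'' x‖ :=
        mul_le_mul_of_nonneg_left hint (div_nonneg (sub_nonneg.2 hab.le) (sq_nonneg _))
      _ = _ := by ring
  refine Summable.of_norm_bounded_eventually
    (g := fun n : ℤ ↦
      (b - a) / (2 * Real.pi) ^ 2 * (∫ x in a..b, 2 * ‖f'' x‖) * (1 / (n : ℝ) ^ 2))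
    ((Real.summable_one_div_int_pow.2 one_lt_two).mul_left _) ?_
  filter_upwards [(Set.finite_singleton (0 : ℤ)).compl_mem_cofinite] with n hn using hbound n hn

theorem conj_fourier_mul_fourierCoeffOn {f : ℝ → ℝ} (hsymm : ∀ x ∈ Icc a b, f (a + b - x) = f x)
    (n : ℤ) :
    starRingEnd ℂ (fourier n (a : AddCircle (b - a)) * fourierCoeffOn hab (fun x ↦ (f x : ℂ)) n) =
      fourier n (a : AddCircle (b - a)) * fourierCoeffOn hab (fun x ↦ (f x : ℂ)) n := by
  have hchar (x : ℝ) : fourier n ((a - (a + b - x) : ℝ) : AddCircle (b - a)) =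
      starRingEnd ℂ (fourier n ((a - x : ℝ) : AddCircle (b - a))) := by
    rw [← fourier_neg, show a - (a + b - x) = x - b by ring, AddCircle.coe_sub,
      addCircle_coe_right_eq_coe_left, ← AddCircle.coe_sub, ← neg_sub a x, AddCircle.coe_neg]
    simp only [fourier_apply, smul_neg, neg_smul]
  rw [fourier_mul_fourierCoeffOn, map_mul, ← intervalIntegral.intervalIntegral_conj]
  congr 1
  · simp
  calc
    _ = ∫ x in a..b, fourier n ((a - (a + b - x) : ℝ) : AddCircle (b - a)) *
          (f (a + b - x) : ℂ) := by
      refine intervalIntegral.integral_congr fun x hx ↦ ?_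
      rw [uIcc_of_le hab.le] at hx
      simp only [map_mul, conj_ofReal, hchar, hsymm x hx]
    _ = _ := by
      rw [intervalIntegral.integral_comp_sub_left
        (fun x ↦ fourier n ((a - x : ℝ) : AddCircle (b - a)) * (f x : ℂ))]
      simp

theorem intervalIntegrable_ofReal {f : ℝ → ℝ} {μ : Measure ℝ} (hf : IntervalIntegrable f μ a b) :
    IntervalIntegrable (fun x ↦ (f x : ℂ)) μ a b :=
  ⟨hf.1.ofReal, hf.2.ofReal⟩

theorem re_fourier_mul_fourierCoeffOn_nonneg {f f' f'' : ℝ → ℝ} {n : ℤ} (hn : n ≠ 0)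
    (hf : ∀ x ∈ Icc a b, HasDerivAt f (f' x) x) (hf' : ∀ x ∈ Icc a b, HasDerivAt f' (f'' x) x)
    (hf'' : IntervalIntegrable f'' volume a b) (hconv : ∀ x ∈ Icc a b, 0 ≤ f'' x)
    (hfab : f a = f b) :
    0 ≤ (fourier n (a : AddCircle (b - a)) * fourierCoeffOn hab (fun x ↦ (f x : ℂ)) n).re := by
  have hint : IntervalIntegrable
      (fun x ↦ (1 - fourier n ((a - x : ℝ) : AddCircle (b - a))) * (f'' x : ℂ)) volume a b :=
    IntervalIntegrable.continuousOn_mul (intervalIntegrable_ofReal hf'') (by fun_prop)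
  have hscal : ((b - a) / (2 * Real.pi * n) ^ 2 : ℂ) =
      ((b - a) / (2 * Real.pi * n) ^ 2 : ℝ) := by push_cast; rfl
  rw [fourier_mul_fourierCoeffOn_of_hasDerivAt_of_hasDerivAt hab hn
    (fun x hx ↦ (hf x hx).ofReal_comp) (fun x hx ↦ (hf' x hx).ofReal_comp)
    (intervalIntegrable_ofReal hf'') (congrArg _ hfab), hscal, re_ofReal_mul, ← reCLM_apply,
    ← reCLM.intervalIntegral_comp_comm hint]
  refine mul_nonneg (div_nonneg (sub_nonneg.2 hab.le) (sq_nonneg _))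
    (intervalIntegral.integral_nonneg hab.le fun x hx ↦ ?_)
  have hre : (fourier n ((a - x : ℝ) : AddCircle (b - a))).re ≤ 1 := by
    rw [fourier_apply]
    exact (re_le_norm _).trans_eq (Circle.norm_coe _)
  rw [reCLM_apply, re_mul_ofReal, sub_re, one_re]
  exact mul_nonneg (sub_nonneg.2 hre) (hconv x hx)

theorem re_fourier_zero_mul_fourierCoeffOn_nonneg {f : ℝ → ℝ} (hmean : 0 ≤ ∫ x in a..b, f x) :
    0 ≤ (fourier 0 (a : AddCircle (b - a)) * fourierCoeffOn hab (fun x ↦ (f x : ℂ)) 0).re := by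
  rw [fourier_mul_fourierCoeffOn]
  simp only [fourier_zero, one_mul, intervalIntegral.integral_ofReal, ← ofReal_sub, ← ofReal_one,
    ← ofReal_div, ← ofReal_mul, ofReal_re]
  exact mul_nonneg (one_div_nonneg.2 (sub_nonneg.2 hab.le)) hmean

theorem hasSum_norm_fourierCoeffOn_of_convex {f f' f'' : ℝ → ℝ}
    (hf : ∀ x ∈ Icc a b, HasDerivAt f (f' x) x) (hf' : ∀ x ∈ Icc a b, HasDerivAt f' (f'' x) x)
    (hf'' : IntervalIntegrable f'' volume a b) (hconv : ∀ x ∈ Icc a b, 0 ≤ f'' x)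
    (hsymm : ∀ x ∈ Icc a b, f (a + b - x) = f x) (hmean : 0 ≤ ∫ x in a..b, f x) :
    HasSum (fun n ↦ ‖fourierCoeffOn hab (fun x ↦ (f x : ℂ)) n‖) (f a) := by
  have hfab : f a = f b := by simpa using (hsymm a (left_mem_Icc.2 hab.le)).symm
  have hsum : Summable (fourierCoeffOn hab fun x ↦ (f x : ℂ)) :=
    summable_fourierCoeffOn_of_hasDerivAt_of_hasDerivAt hab (fun x hx ↦ (hf x hx).ofReal_comp)
      (fun x hx ↦ (hf' x hx).ofReal_comp) (intervalIntegrable_ofReal hf'') (congrArg _ hfab)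
  have hcont : ContinuousOn (fun x ↦ (f x : ℂ)) (Icc a b) :=
    fun x hx ↦ (hf x hx).ofReal_comp.continuousAt.continuousWithinAt
  -- The Fourier series at the endpoint `a` has nonnegative terms, so there it sums the norms.
  have hnorm (n : ℤ) : (‖fourierCoeffOn hab (fun x ↦ (f x : ℂ)) n‖ : ℂ) =
      fourierCoeffOn hab (fun x ↦ (f x : ℂ)) n * fourier n (a : AddCircle (b - a)) := by
    have hre : 0 ≤ (fourier n (a : AddCircle (b - a)) *
        fourierCoeffOn hab (fun x ↦ (f x : ℂ)) n).re := by
      rcases eq_or_ne n 0 with rfl | hn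
      · exact re_fourier_zero_mul_fourierCoeffOn_nonneg hab hmean
      · exact re_fourier_mul_fourierCoeffOn_nonneg hab hn hf hf' hf'' hconv hfab
    have hreal := conj_eq_iff_re.1 (conj_fourier_mul_fourierCoeffOn hab hsymm n)
    rw [mul_comm, ← hreal, ofReal_inj, ← Real.norm_of_nonneg hre, ← norm_real, hreal, norm_mul,
      fourier_apply, Circle.norm_coe, one_mul]
  rw [← hasSum_ofReal]
  simp_rw [hnorm]
  exact hasSum_fourierCoeffOn_mul_fourier hab hcont (congrArg _ hfab) hsum
    (left_mem_Icc.2 hab.le)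

end FourierSeries

section Sinc

open Real

theorem mul_sinc (x : ℝ) : x * sinc x = sin x := by
  rcases eq_or_ne x 0 with rfl | hx
  · simp
  · rw [sinc_of_ne_zero hx, mul_div_cancel₀ _ hx]

theorem sinc_pos_of_abs_lt_pi {x : ℝ} (hx : |x| < π) : 0 < sinc x := by
  wlog hx0 : 0 ≤ x generalizing x
  · rw [← sinc_neg]
    exact this (by rwa [abs_neg]) (by linarith)
  rcases hx0.eq_or_lt with rfl | hx0
  · simp
  · rw [sinc_of_ne_zero hx0.ne']
    exact div_pos (sin_pos_of_pos_of_lt_pi hx0 (abs_lt.1 hx).2) hx0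

theorem contDiff_sinc {n : WithTop ℕ∞} : ContDiff ℝ n sinc := by
  refine contDiff_iff_contDiffAt.2 fun x ↦ ?_
  rcases eq_or_ne x 0 with rfl | hx
  · obtain ⟨p, hp⟩ := analyticAt_sin (x := 0)
    rw [sinc_eq_dslope]
    exact hp.has_fpower_series_dslope_fslope.analyticAt.contDiffAt
  · refine (contDiff_sin.contDiffAt.div contDiffAt_id hx).congr_of_eventuallyEq ?_
    filter_upwards [isOpen_ne.mem_nhds hx] with y hy using sinc_of_ne_zero hy

theorem hasDerivAt_sinc (x : ℝ) : HasDerivAt sinc (deriv sinc x) x :=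
  (contDiff_sinc.differentiable one_ne_zero x).hasDerivAt

theorem contDiff_deriv_sinc {n : ℕ∞} : ContDiff ℝ n (deriv sinc) :=
  contDiff_sinc.deriv'

theorem hasDerivAt_deriv_sinc (x : ℝ) : HasDerivAt (deriv sinc) (deriv (deriv sinc) x) x :=
  (contDiff_deriv_sinc.differentiable one_ne_zero x).hasDerivAt

theorem continuous_deriv_deriv_sinc : Continuous (deriv (deriv sinc)) :=
  contDiff_deriv_sinc.continuous_deriv le_rfl

theorem mul_deriv_sinc (x : ℝ) : x * deriv sinc x = cos x - sinc x := by
  have h : HasDerivAt sin (1 * sinc x + x * deriv sinc x) x := by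
    simpa only [funext mul_sinc] using (hasDerivAt_id' x).fun_mul (hasDerivAt_sinc x)
  linear_combination h.unique (hasDerivAt_sin x)

theorem mul_deriv_deriv_sinc (x : ℝ) :
    x * deriv (deriv sinc) x = -sin x - 2 * deriv sinc x := by
  have h : HasDerivAt (fun y ↦ cos y - sinc y) (1 * deriv sinc x + x * deriv (deriv sinc) x) x := by
    simpa only [funext mul_deriv_sinc] using (hasDerivAt_id' x).fun_mul (hasDerivAt_deriv_sinc x)
  linear_combination h.unique ((hasDerivAt_cos x).fun_sub (hasDerivAt_sinc x))

/-- Equivalently, `1 / sinc` is convex wherever `sinc` is positive. -/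
theorem sinc_mul_deriv_deriv_sinc_le (x : ℝ) :
    sinc x * deriv (deriv sinc) x ≤ 2 * deriv sinc x ^ 2 := by
  have hclosed : IsClosed {x | sinc x * deriv (deriv sinc) x ≤ 2 * deriv sinc x ^ 2} :=
    isClosed_le (continuous_sinc.mul continuous_deriv_deriv_sinc)
      (((contDiff_deriv_sinc (n := 0)).continuous.pow 2).const_mul 2)
  refine (dense_compl_singleton (0 : ℝ)).induction (fun x hx ↦ ?_) hclosed x
  have hx2 : 0 < x ^ 2 := sq_pos_of_ne_zero hx
  have key : x ^ 2 * (2 * deriv sinc x ^ 2 - sinc x * deriv (deriv sinc) x) =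
      (cos x - sinc x) ^ 2 + (1 - sinc x ^ 2) := by
    calc
      _ = 2 * (x * deriv sinc x) ^ 2 - (x * sinc x) * (x * deriv (deriv sinc) x) := by ring
      _ = 2 * (x * deriv sinc x) ^ 2 + sin x ^ 2 + 2 * sinc x * (x * deriv sinc x) := by
        rw [mul_deriv_deriv_sinc, ← mul_sinc]; ring
      _ = _ := by rw [mul_deriv_sinc]; linear_combination sin_sq_add_cos_sq x
  have hnonneg : 0 ≤ (cos x - sinc x) ^ 2 + (1 - sinc x ^ 2) :=
    add_nonneg (sq_nonneg _) (sub_nonneg.2 ((sq_le_one_iff_abs_le_one _).2 (abs_sinc_le_one x)))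
  exact sub_nonneg.1 (nonneg_of_mul_nonneg_right (key ▸ hnonneg) hx2)

theorem hasDerivAt_neg_div_sq {𝕜 : Type*} [NontriviallyNormedField 𝕜] {φ φ' : 𝕜 → 𝕜} {φ'' x : 𝕜}
    (hφ : HasDerivAt φ (φ' x) x) (hφ' : HasDerivAt φ' φ'' x) (hx : φ x ≠ 0) :
    HasDerivAt (fun y ↦ -φ' y / φ y ^ 2) ((2 * φ' x ^ 2 - φ x * φ'') / φ x ^ 3) x := by
  refine (hφ'.fun_neg.fun_div (hφ.fun_pow 2) (pow_ne_zero 2 hx)).congr_deriv ?_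
  field_simp
  ring

theorem sinc_pos_of_mem_Icc {x : ℝ} (hx : x ∈ Set.Icc (-(π / 2)) (π / 2)) : 0 < sinc x :=
  sinc_pos_of_abs_lt_pi ((abs_le.2 hx).trans_lt (by linarith [pi_pos]))

theorem hasDerivAt_inv_sinc {x : ℝ} (hx : 0 < sinc x) :
    HasDerivAt (fun y ↦ (sinc y)⁻¹) (-deriv sinc x / sinc x ^ 2) x :=
  (hasDerivAt_sinc x).fun_inv hx.ne'

theorem hasDerivAt_deriv_inv_sinc {x : ℝ} (hx : 0 < sinc x) :
    HasDerivAt (fun y ↦ -deriv sinc y / sinc y ^ 2)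
      ((2 * deriv sinc x ^ 2 - sinc x * deriv (deriv sinc) x) / sinc x ^ 3) x :=
  hasDerivAt_neg_div_sq (hasDerivAt_sinc x) (hasDerivAt_deriv_sinc x) hx.ne'

theorem continuousOn_deriv_deriv_inv_sinc {s : Set ℝ} (hs : ∀ x ∈ s, 0 < sinc x) :
    ContinuousOn
      (fun x ↦ (2 * deriv sinc x ^ 2 - sinc x * deriv (deriv sinc) x) / sinc x ^ 3) s := by
  have hsinc' : Continuous (deriv sinc) := (contDiff_deriv_sinc (n := 0)).continuous
  have hnum : Continuous fun x ↦ 2 * deriv sinc x ^ 2 - sinc x * deriv (deriv sinc) x :=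
    ((hsinc'.pow 2).const_mul 2).sub (continuous_sinc.mul continuous_deriv_deriv_sinc)
  exact hnum.continuousOn.div (continuous_sinc.pow 3).continuousOn
    fun x hx ↦ pow_ne_zero 3 (hs x hx).ne'

theorem sinc_pi_div_two : sinc (π / 2) = (π / 2)⁻¹ := by
  rw [sinc_of_ne_zero pi_div_two_pos.ne', sin_pi_div_two, one_div]

end Sinc

section InvSinc

open Real

theorem neg_pi_div_two_lt_pi_div_two : -(π / 2) < π / 2 := by linarith [pi_pos]

/-- The Fourier coefficients of `1 / sinc` on `[-π/2, π/2]`, as a function of period `π`. -/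
noncomputable def invSincCoeff : ℤ → ℂ :=
  fourierCoeffOn neg_pi_div_two_lt_pi_div_two fun x ↦ (((sinc x)⁻¹ : ℝ) : ℂ)

theorem hasSum_norm_invSincCoeff : HasSum (fun n ↦ ‖invSincCoeff n‖) (π / 2) := by
  have hab := neg_pi_div_two_lt_pi_div_two
  have hpos : ∀ x ∈ Set.Icc (-(π / 2)) (π / 2), 0 < sinc x := fun x ↦ sinc_pos_of_mem_Icc
  have h := hasSum_norm_fourierCoeffOn_of_convex hab
    (fun x hx ↦ hasDerivAt_inv_sinc (hpos x hx))
    (fun x hx ↦ hasDerivAt_deriv_inv_sinc (hpos x hx))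
    (ContinuousOn.intervalIntegrable_of_Icc hab.le (continuousOn_deriv_deriv_inv_sinc hpos))
    (fun x hx ↦ div_nonneg (sub_nonneg.2 (sinc_mul_deriv_deriv_sinc_le x))
      (pow_pos (hpos x hx) 3).le)
    (fun x _ ↦ by simp only [neg_add_cancel, zero_sub, sinc_neg])
    (intervalIntegral.integral_nonneg hab.le fun x hx ↦ (inv_pos.2 (hpos x hx)).le)
  rwa [sinc_neg, sinc_pi_div_two, inv_inv] at h

theorem hasSum_invSincCoeff_mul_exp {x : ℝ} (hx : x ∈ Set.Icc (-(π / 2)) (π / 2)) :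
    HasSum (fun n ↦ invSincCoeff n * Complex.exp (2 * n * x * Complex.I))
      (((sinc x)⁻¹ : ℝ) : ℂ) := by
  have hcont : ContinuousOn (fun x ↦ (((sinc x)⁻¹ : ℝ) : ℂ)) (Set.Icc (-(π / 2)) (π / 2)) :=
    fun x hx ↦
      (hasDerivAt_inv_sinc (sinc_pos_of_mem_Icc hx)).ofReal_comp.continuousAt.continuousWithinAt
  have hexp (n : ℤ) : fourier n (x : AddCircle (π / 2 - -(π / 2))) =
      Complex.exp (2 * n * x * Complex.I) := by
    rw [fourier_coe_apply]
    have hpi : (π : ℂ) ≠ 0 := by exact_mod_cast pi_ne_zero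
    congr 1
    push_cast
    field_simp
    ring
  simp_rw [← hexp]
  exact hasSum_fourierCoeffOn_mul_fourier neg_pi_div_two_lt_pi_div_two hcont (by rw [sinc_neg])
    hasSum_norm_invSincCoeff.summable.of_norm hx

end InvSinc

section TsumL1

variable {α ι E : Type*} [MeasurableSpace α] {μ : Measure α} [Countable ι] [NormedAddCommGroup E]
  [CompleteSpace E] {F : ι → α → E}

theorem coeFn_tsum_toL1_ae_eq (hF : ∀ i, Integrable (F i) μ)
    (hs : Summable fun i ↦ ∫ a, ‖F i a‖ ∂μ) :
    ⇑(∑' i, (hF i).toL1 (F i)) =ᵐ[μ] fun a ↦ ∑' i, F i a := by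
  have hfin : ∑' i, ‖(hF i).toL1 (F i)‖ₑ ≠ ⊤ :=
    tsum_enorm_ne_top_iff_summable_norm.2 (by simpa only [L1.norm_of_fun_eq_integral_norm] using hs)
  filter_upwards [Lp.hasSum_coeFn_tsum hfin, ae_all_iff.2 fun i ↦ (hF i).coeFn_toL1]
    with a ha hFa
  simpa only [hFa] using ha.tsum_eq.symm

theorem integrable_tsum_of_summable_integral_norm (hF : ∀ i, Integrable (F i) μ)
    (hs : Summable fun i ↦ ∫ a, ‖F i a‖ ∂μ) : Integrable (fun a ↦ ∑' i, F i a) μ :=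
  (L1.integrable_coeFn _).congr (coeFn_tsum_toL1_ae_eq hF hs)

theorem integral_norm_tsum_le_tsum_integral_norm (hF : ∀ i, Integrable (F i) μ)
    (hs : Summable fun i ↦ ∫ a, ‖F i a‖ ∂μ) :
    ∫ a, ‖∑' i, F i a‖ ∂μ ≤ ∑' i, ∫ a, ‖F i a‖ ∂μ := by
  calc
    _ = ‖∑' i, (hF i).toL1 (F i)‖ := by
      rw [L1.norm_eq_integral_norm]
      refine integral_congr_ae ?_
      filter_upwards [coeFn_tsum_toL1_ae_eq hF hs] with a ha using congrArg _ ha.symm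
    _ ≤ ∑' i, ‖(hF i).toL1 (F i)‖ :=
      norm_tsum_le_tsum_norm (by simpa only [L1.norm_of_fun_eq_integral_norm] using hs)
    _ = _ := by simp only [L1.norm_of_fun_eq_integral_norm]

end TsumL1

section TranslateSeries

open Real
open scoped FourierTransform

/-- The series `∑ i, c i • f (· + x i)` of translates of `f`, i.e. the convolution of `f` with the
discrete measure `∑ i, c i • δ_{-x i}`; it is `0` at the points where it is not summable. -/
noncomputable def translateSeries {R ι V E : Type*} [Add V] [AddCommMonoid E] [TopologicalSpace E]
    [SMul R E] (c : ι → R) (x : ι → V) (f : V → E) (t : V) : E :=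
  ∑' i, c i • f (t + x i)

variable {ι V E : Type*} [NormedAddCommGroup V] [InnerProductSpace ℝ V]
  [FiniteDimensional ℝ V] [MeasurableSpace V] [BorelSpace V]
  [NormedAddCommGroup E] [NormedSpace ℂ E] {c : ι → ℂ} {f : V → E}

theorem integral_norm_smul_comp_add_right (a : ℂ) (f : V → E) (y : V) :
    ∫ t, ‖a • f (t + y)‖ = ‖a‖ * ∫ t, ‖f t‖ := by
  simp only [norm_smul]
  rw [integral_const_mul, integral_add_right_eq_self (fun t ↦ ‖f t‖)]

theorem fourier_smul_comp_add_right (a : ℂ) (f : V → E) (y w : V) :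
    𝓕 (fun t ↦ a • f (t + y)) w = (a * 𝐞 (inner ℝ y w)) • 𝓕 f w := by
  have hsmul : 𝓕 (fun t ↦ a • f (t + y)) w = a • 𝓕 (f ∘ fun t ↦ t + y) w := by
    simp only [fourier_eq, Function.comp_apply, smul_comm _ a, integral_smul]
  rw [hsmul, mul_smul]
  exact congrArg (a • ·)
    (congrFun (VectorFourier.fourierIntegral_comp_add_right 𝐞 volume (innerₗ V) f y) w)

theorem summable_integral_norm_smul_comp_add_right (hc : Summable fun i ↦ ‖c i‖) (x : ι → V)
    (f : V → E) : Summable fun i ↦ ∫ t, ‖c i • f (t + x i)‖ := by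
  simpa only [integral_norm_smul_comp_add_right] using hc.mul_right _

variable [Countable ι]

theorem fourier_translateSeries (hc : Summable fun i ↦ ‖c i‖) (x : ι → V) (hf : Integrable f)
    (w : V) :
    𝓕 (translateSeries c x f) w = (∑' i, c i * 𝐞 (inner ℝ (x i) w)) • 𝓕 f w := by
  have hF (i : ι) : Integrable fun t ↦ 𝐞 (-inner ℝ t w) • c i • f (t + x i) :=
    (fourierIntegral_convergent_iff w).2 ((hf.comp_add_right (x i)).smul (c i))
  have hs : Summable fun i ↦ ∫ t, ‖𝐞 (-inner ℝ t w) • c i • f (t + x i)‖ := by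
    simpa only [Circle.norm_smul] using summable_integral_norm_smul_comp_add_right hc x f
  have hcs : Summable fun i ↦ c i * (𝐞 (inner ℝ (x i) w) : ℂ) := by
    refine Summable.of_norm ?_
    simpa only [norm_mul, Circle.norm_coe, mul_one] using hc
  calc
    _ = ∫ t, ∑' i, 𝐞 (-inner ℝ t w) • c i • f (t + x i) := by
      simp only [fourier_eq, translateSeries, tsum_const_smul']
    _ = ∑' i, 𝓕 (fun t ↦ c i • f (t + x i)) w :=
      (integral_tsum_of_summable_integral_norm hF hs).symm
    _ = _ := by simp only [fourier_smul_comp_add_right, hcs.tsum_smul_const]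

variable [CompleteSpace E]

theorem integrable_translateSeries (hc : Summable fun i ↦ ‖c i‖) (x : ι → V) (hf : Integrable f) :
    Integrable (translateSeries c x f) :=
  integrable_tsum_of_summable_integral_norm (fun i ↦ (hf.comp_add_right (x i)).smul (c i))
    (summable_integral_norm_smul_comp_add_right hc x f)

theorem integral_norm_translateSeries_le (hc : Summable fun i ↦ ‖c i‖) (x : ι → V)
    (hf : Integrable f) :
    ∫ t, ‖translateSeries c x f t‖ ≤ (∑' i, ‖c i‖) * ∫ t, ‖f t‖ := by
  calc
    _ ≤ ∑' i, ∫ t, ‖c i • f (t + x i)‖ :=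
      integral_norm_tsum_le_tsum_integral_norm (fun i ↦ (hf.comp_add_right (x i)).smul (c i))
        (summable_integral_norm_smul_comp_add_right hc x f)
    _ = _ := by simp only [integral_norm_smul_comp_add_right, tsum_mul_right]

end TranslateSeries

section FourierUniqueness

open Real
open scoped FourierTransform ContDiff

variable {V E : Type*} [NormedAddCommGroup V] [InnerProductSpace ℝ V]
  [FiniteDimensional ℝ V] [MeasurableSpace V] [BorelSpace V]
  [NormedAddCommGroup E] [NormedSpace ℂ E]

theorem exists_schwartzMap_fourier_eq {g : V → ℂ} (hg : ContDiff ℝ ∞ g)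
    (hg' : HasCompactSupport g) :
    ∃ φ : SchwartzMap V ℂ, 𝓕 (φ : V → ℂ) = g := by
  refine ⟨FourierTransformInv.fourierInv (hg'.toSchwartzMap hg), ?_⟩
  rw [← SchwartzMap.fourier_coe, FourierTransform.fourier_fourierInv_eq]
  rfl

theorem fourier_sub {f g : V → E} (hf : Integrable f) (hg : Integrable g) :
    𝓕 (f - g) = 𝓕 f - 𝓕 g := by
  ext w
  simp only [Pi.sub_apply, fourier_eq, smul_sub]
  exact integral_sub ((fourierIntegral_convergent_iff w).2 hf)
    ((fourierIntegral_convergent_iff w).2 hg)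

variable [CompleteSpace E]

theorem ae_eq_zero_of_fourier_eq_zero {f : V → E} (hf : Integrable f) (h : 𝓕 f = 0) :
    f =ᵐ[volume] 0 := by
  let _ := NormedSpace.complexToReal (E := E)
  refine ae_eq_zero_of_integral_contDiff_smul_eq_zero hf.locallyIntegrable fun g hg hgc ↦ ?_
  obtain ⟨φ, hφ⟩ := exists_schwartzMap_fourier_eq (g := fun x ↦ (g x : ℂ))
    (Complex.ofRealCLM.contDiff.comp hg) (hgc.comp_left Complex.ofReal_zero)
  calc
    ∫ x, g x • f x = ∫ x, 𝓕 (φ : V → ℂ) x • f x := by simp only [hφ, Complex.coe_smul]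
    _ = ∫ x, φ x • 𝓕 f x := by
      have := VectorFourier.integral_fourierIntegral_smul_eq_flip (μ := volume) (ν := volume)
        (L := innerₗ V) continuous_fourierChar continuous_inner φ.integrable hf
      rwa [flip_innerₗ] at this
    _ = 0 := by simp only [h, Pi.zero_apply, smul_zero, integral_zero]

theorem ae_eq_of_fourier_eq {f g : V → E} (hf : Integrable f) (hg : Integrable g)
    (h : 𝓕 f = 𝓕 g) : f =ᵐ[volume] g :=
  (sub_ae_eq_zero f g).1 <|
    ae_eq_zero_of_fourier_eq_zero (hf.sub hg) (by rw [fourier_sub hf hg, h, sub_self])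

end FourierUniqueness

section Convolution

open scoped ENNReal Convolution

theorem lintegral_enorm_convolution_lsmul_le {𝕜 G E : Type*} [NontriviallyNormedField 𝕜]
    [AddCommGroup G] [MeasurableSpace G] [MeasurableAdd₂ G] [MeasurableNeg G]
    [NormedAddCommGroup E] [NormedSpace ℝ E] [NormedSpace 𝕜 E]
    {μ ν : Measure G} [SFinite μ] [SFinite ν] [ν.IsAddLeftInvariant] [ν.IsNegInvariant]
    {k : G → 𝕜} (hk : StronglyMeasurable k) {u : G → E} (hu : AEStronglyMeasurable u ν) {M : ℝ≥0∞}
    (hM : ∀ s, ∫⁻ t, ‖k (t - s)‖ₑ ∂μ ≤ M) :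
    ∫⁻ t, ‖(k ⋆[ContinuousLinearMap.lsmul 𝕜 𝕜, ν] u) t‖ₑ ∂μ ≤ M * ∫⁻ s, ‖u s‖ₑ ∂ν := by
  have hmeas : AEMeasurable (Function.uncurry fun t s ↦ ‖k (t - s)‖ₑ * ‖u s‖ₑ) (μ.prod ν) :=
    (hk.enorm.comp measurable_sub).aemeasurable.mul hu.enorm.comp_snd
  calc
    _ ≤ ∫⁻ t, ∫⁻ s, ‖k (t - s)‖ₑ * ‖u s‖ₑ ∂ν ∂μ := by
      refine lintegral_mono fun t ↦ ?_
      rw [convolution_lsmul_swap]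
      simpa only [enorm_smul] using enorm_integral_le_lintegral_enorm fun s ↦ k (t - s) • u s
    _ = ∫⁻ s, ∫⁻ t, ‖k (t - s)‖ₑ * ‖u s‖ₑ ∂μ ∂ν := lintegral_lintegral_swap hmeas
    _ = ∫⁻ s, (∫⁻ t, ‖k (t - s)‖ₑ ∂μ) * ‖u s‖ₑ ∂ν := by
      refine lintegral_congr fun s ↦ lintegral_mul_const _ ?_
      exact hk.enorm.comp (measurable_sub_const s)
    _ ≤ ∫⁻ s, M * ‖u s‖ₑ ∂ν := by gcongr; exact hM _
    _ = _ := lintegral_const_mul'' _ hu.enorm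

end Convolution

section AveragingKernel

open Real Set
open scoped FourierTransform ENNReal

/-- The density `(2r)⁻¹ 1_{[-r, r]}` of the uniform distribution on `[-r, r]`, with complex values;
convolution with it averages over intervals of length `2r`. -/
noncomputable def averagingKernel (r : ℝ) : ℝ → ℂ :=
  (Icc (-r) r).indicator fun _ ↦ (((2 * r)⁻¹ : ℝ) : ℂ)

theorem stronglyMeasurable_averagingKernel (r : ℝ) : StronglyMeasurable (averagingKernel r) :=
  stronglyMeasurable_const.indicator measurableSet_Icc

theorem integrable_averagingKernel (r : ℝ) : Integrable (averagingKernel r) :=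
  (integrable_indicator_iff measurableSet_Icc).2 (integrableOn_const (by simp))

theorem integral_exp_mul_mul_I_eq_sinc (r a : ℝ) :
    ∫ t in -r..r, Complex.exp ((a * t : ℝ) * Complex.I) = 2 * r * sinc (a * r) := by
  rcases eq_or_ne a 0 with rfl | ha
  · simp [two_mul]
  · rw [intervalIntegral.integral_comp_mul_left (fun t : ℝ ↦ Complex.exp (t * Complex.I)) ha,
      mul_neg, integral_exp_mul_I_eq_sinc, Complex.real_smul]
    have : (a : ℂ) ≠ 0 := by exact_mod_cast ha
    push_cast
    field_simp

theorem fourier_averagingKernel {r : ℝ} (hr : 0 < r) (w : ℝ) :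
    𝓕 (averagingKernel r) w = sinc (2 * π * r * w) := by
  have hr' : (r : ℂ) ≠ 0 := by exact_mod_cast hr.ne'
  calc
    _ = ∫ t, (Icc (-r) r).indicator
        (fun t : ℝ ↦ Complex.exp ((-(2 * π * w) * t : ℝ) * Complex.I) * ((2 * r)⁻¹ : ℝ)) t := by
      rw [fourier_real_eq_integral_exp_smul]
      refine integral_congr_ae (ae_of_all _ fun t ↦ ?_)
      simp only [averagingKernel, indicator_apply, smul_eq_mul, mul_ite, mul_zero]
      ring_nf
    _ = (∫ t in -r..r, Complex.exp ((-(2 * π * w) * t : ℝ) * Complex.I)) * ((2 * r)⁻¹ : ℝ) := by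
      rw [integral_indicator measurableSet_Icc, integral_Icc_eq_integral_Ioc,
        ← intervalIntegral.integral_of_le (by linarith), intervalIntegral.integral_mul_const]
    _ = sinc (-(2 * π * r * w)) := by
      rw [integral_exp_mul_mul_I_eq_sinc, show -(2 * π * w) * r = -(2 * π * r * w) by ring]
      push_cast
      field_simp
    _ = _ := by rw [sinc_neg]

theorem lintegral_enorm_averagingKernel_sub {r : ℝ} (hr : 0 < r) (μ : Measure ℝ) (s : ℝ) :
    ∫⁻ t, ‖averagingKernel r (t - s)‖ₑ ∂μ =
      ENNReal.ofReal (2 * r)⁻¹ * μ (Icc (s - r) (s + r)) := by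
  have hind (t : ℝ) : ‖averagingKernel r (t - s)‖ₑ =
      (Icc (s - r) (s + r)).indicator (fun _ ↦ ENNReal.ofReal (2 * r)⁻¹) t := by
    have hmem : t - s ∈ Icc (-r) r ↔ t ∈ Icc (s - r) (s + r) := by
      rw [sub_mem_Icc_iff_left, neg_add_eq_sub, add_comm]
    rw [averagingKernel, enorm_indicator_eq_indicator_enorm]
    simp only [indicator_apply, hmem, ← ofReal_norm, Complex.norm_real,
      norm_of_nonneg (inv_nonneg.2 (mul_pos two_pos hr).le)]
  simp only [hind, lintegral_indicator_const measurableSet_Icc]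

end AveragingKernel

section PaleyWiener

open Real Set
open scoped FourierTransform Convolution

/-- The maximum Nyquist density `W · sup_t μ [t, t + 1/W]` of a measure `μ`; for a set `Ω` one takes
`μ` to be Lebesgue measure restricted to `Ω`. The supremum is the real one, `0` if unbounded. -/
noncomputable def maxNyquistDensity (μ : Measure ℝ) (W : ℝ) : ℝ :=
  W * ⨆ t, μ.real (Icc t (t + 1 / W))

variable {E : Type*} [NormedAddCommGroup E] [NormedSpace ℂ E] {W : ℝ} {f : ℝ → E}

theorem maxNyquistDensity_nonneg (hW : 0 ≤ W) (μ : Measure ℝ) : 0 ≤ maxNyquistDensity μ W :=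
  mul_nonneg hW (iSup_nonneg fun _ ↦ measureReal_nonneg)

theorem lintegral_enorm_averagingKernel_sub_le (hW : 0 < W) {μ : Measure ℝ}
    [IsLocallyFiniteMeasure μ] (hbdd : BddAbove (range fun t ↦ μ.real (Icc t (t + 1 / W))))
    (s : ℝ) :
    ∫⁻ t, ‖averagingKernel (1 / (2 * W)) (t - s)‖ₑ ∂μ ≤
      ENNReal.ofReal (maxNyquistDensity μ W) := by
  rw [lintegral_enorm_averagingKernel_sub (by positivity),
    show s + 1 / (2 * W) = s - 1 / (2 * W) + 1 / W by field_simp; ring,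
    show (2 * (1 / (2 * W)))⁻¹ = W by field_simp,
    ← ofReal_measureReal isCompact_Icc.measure_lt_top.ne, ← ENNReal.ofReal_mul hW.le]
  exact ENNReal.ofReal_le_ofReal (mul_le_mul_of_nonneg_left (le_ciSup hbdd _) hW.le)

theorem integral_norm_averagingKernel_convolution_le (hW : 0 < W) {μ : Measure ℝ}
    [IsLocallyFiniteMeasure μ] (hμ : μ ≪ volume)
    (hbdd : BddAbove (range fun t ↦ μ.real (Icc t (t + 1 / W)))) {u : ℝ → E}
    (hu : Integrable u) :
    ∫ t, ‖(averagingKernel (1 / (2 * W)) ⋆[ContinuousLinearMap.lsmul ℂ ℂ] u) t‖ ∂μ ≤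
      maxNyquistDensity μ W * ∫ t, ‖u t‖ := by
  have hρ := maxNyquistDensity_nonneg hW.le μ
  have hconv := (integrable_averagingKernel (1 / (2 * W))).integrable_convolution
    (ContinuousLinearMap.lsmul ℂ ℂ) hu
  rw [integral_norm_eq_lintegral_enorm (hconv.aestronglyMeasurable.mono_ac hμ)]
  refine ENNReal.toReal_le_of_le_ofReal (by positivity) ?_
  rw [ENNReal.ofReal_mul hρ, ofReal_integral_norm_eq_lintegral_enorm hu]
  exact lintegral_enorm_convolution_lsmul_le (stronglyMeasurable_averagingKernel _)
    hu.aestronglyMeasurable (lintegral_enorm_averagingKernel_sub_le hW hbdd)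

theorem sinc_mul_tsum_invSincCoeff_mul_fourierChar (hW : 0 < W) {w : ℝ}
    (hw : w ∈ Icc (-(W / 2)) (W / 2)) :
    (sinc (2 * π * (1 / (2 * W)) * w) : ℂ) *
      ∑' n : ℤ, invSincCoeff n * 𝐞 (inner ℝ (n / W : ℝ) w) = 1 := by
  have hx : π * w / W ∈ Icc (-(π / 2)) (π / 2) := by
    constructor
    · rw [le_div_iff₀ hW]; nlinarith [hw.1, pi_pos]
    · rw [div_le_iff₀ hW]; nlinarith [hw.2, pi_pos]
  have hterm (n : ℤ) : (𝐞 (inner ℝ (n / W : ℝ) w) : ℂ) =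
      Complex.exp (2 * n * (π * w / W : ℝ) * Complex.I) := by
    rw [fourierChar_apply, RCLike.inner_apply, conj_trivial]
    congr 2
    push_cast
    ring
  have hsinc : (sinc (π * w / W) : ℂ) ≠ 0 := by exact_mod_cast (sinc_pos_of_mem_Icc hx).ne'
  rw [show 2 * π * (1 / (2 * W)) * w = π * w / W by field_simp]
  simp only [hterm, (hasSum_invSincCoeff_mul_exp hx).tsum_eq, Complex.ofReal_inv,
    mul_inv_cancel₀ hsinc]

variable [CompleteSpace E]

theorem ae_eq_averagingKernel_convolution_translateSeries (hW : 0 < W) (hf : Integrable f)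
    (hband : ∀ w ∉ Icc (-(W / 2)) (W / 2), 𝓕 f w = 0) :
    f =ᵐ[volume] averagingKernel (1 / (2 * W)) ⋆[ContinuousLinearMap.lsmul ℂ ℂ]
      translateSeries invSincCoeff (fun n : ℤ ↦ (n / W : ℝ)) f := by
  have hu := integrable_translateSeries hasSum_norm_invSincCoeff.summable
    (fun n : ℤ ↦ (n / W : ℝ)) hf
  have hk := integrable_averagingKernel (1 / (2 * W))
  refine ae_eq_of_fourier_eq hf (hk.integrable_convolution _ hu) (funext fun w ↦ ?_)
  rw [fourier_smul_convolution_eq hk hu, fourier_averagingKernel (by positivity),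
    fourier_translateSeries hasSum_norm_invSincCoeff.summable _ hf, smul_smul]
  by_cases hw : w ∈ Icc (-(W / 2)) (W / 2)
  · rw [sinc_mul_tsum_invSincCoeff_mul_fourierChar hW hw, one_smul]
  · rw [hband w hw, smul_zero]

theorem integral_norm_le_maxNyquistDensity_mul (hW : 0 < W) (hf : Integrable f)
    (hband : ∀ w ∉ Icc (-(W / 2)) (W / 2), 𝓕 f w = 0) {μ : Measure ℝ} [IsLocallyFiniteMeasure μ]
    (hμ : μ ≪ volume) (hbdd : BddAbove (range fun t ↦ μ.real (Icc t (t + 1 / W)))) :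
    ∫ t, ‖f t‖ ∂μ ≤ π / 2 * maxNyquistDensity μ W * ∫ t, ‖f t‖ := by
  have hc := hasSum_norm_invSincCoeff
  let u := translateSeries invSincCoeff (fun n : ℤ ↦ (n / W : ℝ)) f
  calc
    _ = ∫ t, ‖(averagingKernel (1 / (2 * W)) ⋆[ContinuousLinearMap.lsmul ℂ ℂ] u) t‖ ∂μ :=
      integral_congr_ae <|
        (hμ.ae_eq (ae_eq_averagingKernel_convolution_translateSeries hW hf hband)).fun_comp _
    _ ≤ maxNyquistDensity μ W * ∫ t, ‖u t‖ :=
      integral_norm_averagingKernel_convolution_le hW hμ hbdd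
        (integrable_translateSeries hc.summable _ hf)
    _ ≤ maxNyquistDensity μ W * (π / 2 * ∫ t, ‖f t‖) :=
      mul_le_mul_of_nonneg_left
        (hc.tsum_eq ▸ integral_norm_translateSeries_le hc.summable _ hf)
        (maxNyquistDensity_nonneg hW.le μ)
    _ = _ := by ring

theorem donoho_logan_large_sieve_paley_wiener_general (hW : 0 < W) (hf : Integrable f)
    (hband : ∀ w ∉ Icc (-(W / 2)) (W / 2), 𝓕 f w = 0) {μ : Measure ℝ} [IsLocallyFiniteMeasure μ]
    (hμ : μ ≪ volume) (hbdd : BddAbove (range fun t ↦ μ.real (Icc t (t + 1 / W)))) :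
    ∫ t, ‖f t‖ ∂μ ≤ π / 2 * maxNyquistDensity μ W * ∫ t, ‖f t‖ ∧
      (maxNyquistDensity μ W < 1 / π → ¬ f =ᵐ[volume] 0 →
        ∫ t, ‖f t‖ ∂μ < 1 / 2 * ∫ t, ‖f t‖) := by
  have hle := integral_norm_le_maxNyquistDensity_mul hW hf hband hμ hbdd
  refine ⟨hle, fun hρ hf0 ↦ hle.trans_lt ?_⟩
  have hpos : 0 < ∫ t, ‖f t‖ :=
    (integral_nonneg fun _ ↦ norm_nonneg _).lt_of_ne fun h ↦
      hf0 (((integral_eq_zero_iff_of_nonneg (fun _ ↦ norm_nonneg _) hf.norm).1 h.symm).mono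
        fun _ ↦ norm_eq_zero.1)
  gcongr
  calc
    π / 2 * maxNyquistDensity μ W < π / 2 * (1 / π) := by gcongr
    _ = 1 / 2 := by field_simp

theorem fourier_eq_integral_mul_exp (f : ℝ → ℂ) (w : ℝ) :
    𝓕 f w = ∫ t, f t * Complex.exp (-(Complex.I * (2 * π * w : ℝ) * t)) := by
  rw [fourier_real_eq_integral_exp_smul]
  refine integral_congr_ae (ae_of_all _ fun t ↦ ?_)
  simp only [smul_eq_mul, mul_comm (f t)]
  congr 2
  push_cast
  ring

theorem maxNyquistDensity_restrict (μ : Measure ℝ) (W : ℝ) (Ω : Set ℝ) :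
    maxNyquistDensity (μ.restrict Ω) W =
      W * ⨆ t, (μ (Ω ∩ Icc t (t + 1 / W))).toReal := by
  simp only [maxNyquistDensity, Measure.real, Measure.restrict_apply measurableSet_Icc,
    inter_comm Ω]

theorem bddAbove_range_restrict_real_Icc (Ω : Set ℝ) {δ : ℝ} (hδ : 0 ≤ δ) :
    BddAbove (range fun t ↦ (volume.restrict Ω).real (Icc t (t + δ))) := by
  refine ⟨δ, forall_mem_range.2 fun t ↦ ?_⟩
  have hlt : volume (Icc t (t + δ)) ≠ ⊤ := isCompact_Icc.measure_lt_top.ne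
  refine (ENNReal.toReal_mono hlt (Measure.restrict_apply_le _ _)).trans ?_
  rw [volume_Icc, add_sub_cancel_left, ENNReal.toReal_ofReal hδ]

end PaleyWiener

/-- **Donoho–Logan large sieve for the Paley–Wiener space.**
Let `W > 0` and let `f ∈ L¹(ℝ)` have (distributional) Fourier transform
`f̂(ξ) = ∫ f(t) e^{-iξt} dt` supported in `[-πW, πW]`.  With the maximum Nyquist density
`ρ_ℝ(Ω, W) = W · sup_t |Ω ∩ [t, t + 1/W]|`, one has
`∫_Ω |f| ≤ (π/2) · ρ_ℝ(Ω, W) · ∫_ℝ |f|`; in particular, if `ρ_ℝ(Ω, W) < 1/π`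
(and `f` is nonzero) then `‖f·χ_Ω‖₁ < (1/2) ‖f‖₁`. -/
theorem donoho_logan_large_sieve_paley_wiener
    (W : ℝ) (hW : 0 < W)
    (f : ℝ → ℂ) (hf : Integrable f volume)
    (hsupp : ∀ ξ : ℝ, ξ ∉ Set.Icc (-(Real.pi * W)) (Real.pi * W) →
      (∫ t : ℝ, f t * Complex.exp (-(Complex.I * ξ * t))) = 0)
    (Ω : Set ℝ) (hΩ : MeasurableSet Ω) :
    ((∫ t in Ω, ‖f t‖) ≤
      (Real.pi / 2) * (W * ⨆ t : ℝ, (volume (Ω ∩ Set.Icc t (t + 1 / W))).toReal) *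
        (∫ t : ℝ, ‖f t‖)) ∧
    ((W * ⨆ t : ℝ, (volume (Ω ∩ Set.Icc t (t + 1 / W))).toReal) < 1 / Real.pi →
      ¬ (f =ᵐ[volume] (0 : ℝ → ℂ)) →
      (∫ t in Ω, ‖f t‖) < (1 / 2) * ∫ t : ℝ, ‖f t‖) := by
  have hband (w : ℝ) (hw : w ∉ Set.Icc (-(W / 2)) (W / 2)) : FourierTransform.fourier f w = 0 := by
    rw [fourier_eq_integral_mul_exp]
    refine hsupp _ fun hmem ↦ hw ⟨?_, ?_⟩
    · nlinarith [hmem.1, Real.pi_pos]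
    · nlinarith [hmem.2, Real.pi_pos]
  rw [← maxNyquistDensity_restrict]
  exact donoho_logan_large_sieve_paley_wiener_general hW hf hband
    Measure.absolutelyContinuous_restrict (bddAbove_range_restrict_real_Icc Ω (by positivity))
end
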